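/- arXiv:1707.09042 — 2 statements merged into one kernel-verified Lean document; each statement's English description precedes it below -/
import Mathlib

section
/- Fix a rational α ∈ (0,1/2). Then the limits below exist and lim_{d→∞} lim_{N→∞} ( E_{G(N,d/N)}[MCUT_α] − N d α(1−α) ) / (√d · N) = lim_{N→∞} (1/(4N)) E[ max_{σ ∈ S_N(α)} H_0(σ) ], where N ranges over integers with αN an integer. -/
open Finset MeasureTheory

noncomputable section

/-- Number of edges of a simple graph on `Fin N`. -/
def numEdges {N : ℕ} (G : SimpleGraph (Fin N)) : ℕ := Nat.card G.edgeSet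

/-- Number of edges of `G` with exactly one endpoint in `s` (counted as ordered pairs
with the first coordinate in `s`, so each crossing edge is counted once). -/
def cutCount {N : ℕ} (G : SimpleGraph (Fin N)) (s : Finset (Fin N)) : ℕ :=
  Nat.card {p : Fin N × Fin N // p.1 ∈ s ∧ p.2 ∉ s ∧ G.Adj p.1 p.2}

/-- `MCUT_α(G)`: the maximum over vertex sets `V₁` of size `αN` of the number of
edges of `G` with exactly one endpoint in `V₁`. -/
def mcut {N : ℕ} (α : ℚ) (G : SimpleGraph (Fin N)) : ℕ :=
  (Finset.powersetCard ⌊α * (N : ℚ)⌋₊ (Finset.univ : Finset (Fin N))).sup fun s => cutCount G s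

/-- `α N` is a (nonnegative) integer. -/
def alphaIntegral (α : ℚ) (N : ℕ) : Prop := ∃ k : ℕ, α * (N : ℚ) = (k : ℚ)

/-- Expectation of `f` under the Erdős–Rényi measure `G(N,p)`: each potential edge is
present independently with probability `p`, so a graph with `e` edges has probability
`p^e (1-p)^(C(N,2) - e)`. -/
def erExp (N : ℕ) (p : ℝ) (f : SimpleGraph (Fin N) → ℝ) : ℝ :=
  ∑ G : SimpleGraph (Fin N),
    p ^ numEdges G * (1 - p) ^ (N.choose 2 - numEdges G) * f G

/-- Probability of an event under the Erdős–Rényi measure `G(N,p)`. -/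
def erProb (N : ℕ) (p : ℝ) (E : Set (SimpleGraph (Fin N))) : ℝ :=
  erExp N p (Set.indicator E fun _ => 1)

/-- `G` is `d`-regular. -/
def IsDReg {N : ℕ} (d : ℕ) (G : SimpleGraph (Fin N)) : Prop :=
  ∀ v, Nat.card (G.neighborSet v) = d

open Classical in
/-- The finite set of simple `d`-regular graphs on `N` labeled vertices. -/
def regFinset (N d : ℕ) : Finset (SimpleGraph (Fin N)) :=
  Finset.univ.filter fun G => IsDReg d G

/-- Expectation of `f` under the uniform measure `R(N,d)` on simple `d`-regular graphs. -/
def regExp (N d : ℕ) (f : SimpleGraph (Fin N) → ℝ) : ℝ :=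
  (∑ G ∈ regFinset N d, f G) / ((regFinset N d).card : ℝ)

/-- Probability of an event under the uniform measure `R(N,d)`. -/
def regProb (N d : ℕ) (E : Set (SimpleGraph (Fin N))) : ℝ :=
  regExp N d (Set.indicator E fun _ => 1)

end

open Finset MeasureTheory ProbabilityTheory

noncomputable section

/-- The law of the independent Gaussian entries used to build a GOE matrix: a product of
centered real Gaussians indexed by pairs `(i,j)`, with variance `2` on the diagonal and `1`
off the diagonal.  (Only the coordinates with `i ≤ j` are ever read off, so this realizes a
GOE matrix: the entries `(J_{ij})_{i≤j}` are independent centered Gaussians with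
`Var(J_{ij}) = 1` for `i < j` and `Var(J_{ii}) = 2`.) -/
def goeMeasure (N : ℕ) : Measure ((Fin N × Fin N) → ℝ) :=
  Measure.pi fun p => gaussianReal 0 (if p.1 = p.2 then 2 else 1)

/-- The symmetric (GOE) matrix built from the sample `ω`. -/
def Jmat {N : ℕ} (ω : (Fin N × Fin N) → ℝ) (i j : Fin N) : ℝ :=
  if i ≤ j then ω (i, j) else ω (j, i)

/-- The value `±1` of a Boolean spin. -/
def spin (b : Bool) : ℝ := if b then 1 else -1

/-- The configuration space `S_N(α) = {σ ∈ {−1,1}^N : ∑ᵢ σᵢ = N(2α−1)}`. -/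
def SNset (N : ℕ) (α : ℚ) : Set (Fin N → Bool) :=
  {σ | ∑ i, spin (σ i) = (N : ℝ) * (2 * (α : ℝ) - 1)}

open Classical in
/-- `S_N(α)` as a finite set. -/
def SNfinset (N : ℕ) (α : ℚ) : Finset (Fin N → Bool) :=
  Finset.univ.filter fun σ => ∑ i, spin (σ i) = (N : ℝ) * (2 * (α : ℝ) - 1)

/-- `H_0(σ) = N^{-1/2} ∑_{i,j} J_{ij} σ_i σ_j`. -/
def H0 {N : ℕ} (ω : (Fin N × Fin N) → ℝ) (σ : Fin N → Bool) : ℝ :=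
  (Real.sqrt N)⁻¹ * ∑ i, ∑ j, Jmat ω i j * spin (σ i) * spin (σ j)

/-- `g_i = N^{-1/2} ∑_j J_{ij}`. -/
def gvec {N : ℕ} (ω : (Fin N × Fin N) → ℝ) (i : Fin N) : ℝ :=
  (Real.sqrt N)⁻¹ * ∑ j, Jmat ω i j

/-- `H_1(σ) = H_0(σ) − 2(2α−1) ∑ᵢ gᵢ σᵢ + (2α−1)² N^{-1/2} ∑_{i,j} J_{ij}`. -/
def H1 {N : ℕ} (α : ℚ) (ω : (Fin N × Fin N) → ℝ) (σ : Fin N → Bool) : ℝ :=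
  H0 ω σ - 2 * (2 * (α : ℝ) - 1) * ∑ i, gvec ω i * spin (σ i)
    + (2 * (α : ℝ) - 1) ^ 2 * ((Real.sqrt N)⁻¹ * ∑ i, ∑ j, Jmat ω i j)

/-- `E[max_{σ ∈ S_N(α)} H(σ)]`, the expectation over the GOE matrix of the maximum of a
Hamiltonian `H` over the configuration space `S_N(α)`. -/
def Emax (N : ℕ) (α : ℚ) (H : ((Fin N × Fin N) → ℝ) → (Fin N → Bool) → ℝ) : ℝ :=
  ∫ ω, sSup ((H ω) '' SNset N α) ∂(goeMeasure N)

end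


section PartA

open Function

/-- Bernoulli weight of a bit. -/
noncomputable def bw (p : ℝ) (b : Bool) : ℝ := if b then p else 1 - p

/-- Finite Bernoulli product expectation. -/
noncomputable def Bexp {E : Type} [Fintype E] [DecidableEq E] (p : E → ℝ) (f : (E → Bool) → ℝ) : ℝ :=
  ∑ x : E → Bool, (∏ e, bw (p e) (x e)) * f x

variable {E : Type} [Fintype E] [DecidableEq E]

lemma sum_bits_pair (G : (E → Bool) → ℝ) (e : E) :
    2 * ∑ x, G x = ∑ x, (G (update x e true) + G (update x e false)) := by
  have h1 : ∑ x : E → Bool, G x = ∑ x : E → Bool, G (update x e (!(x e))) := by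
    have hinv : Function.Involutive (fun x : E → Bool => update x e (!(x e))) := by
      intro x; ext i; by_cases h : i = e
      · subst h; simp
      · simp [h]
    exact (Equiv.sum_comp hinv.toPerm G).symm
  rw [two_mul]
  nth_rewrite 2 [h1]
  rw [← Finset.sum_add_distrib]
  refine Finset.sum_congr rfl fun x _ => ?_
  cases hx : x e
  · have : update x e false = x := by rw [← hx]; simp
    simp [this]; ring
  · have : update x e true = x := by rw [← hx]; simp
    simp [this]

lemma Bexp_mono {p : E → ℝ} (h0 : ∀ e, 0 ≤ p e) (h1 : ∀ e, p e ≤ 1) {f g : (E → Bool) → ℝ}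
    (h : ∀ x, f x ≤ g x) : Bexp p f ≤ Bexp p g := by
  refine Finset.sum_le_sum fun x _ => mul_le_mul_of_nonneg_left (h x) ?_
  refine Finset.prod_nonneg fun e _ => ?_
  unfold bw; split_ifs
  · exact h0 e
  · linarith [h1 e]

lemma Bexp_add (p : E → ℝ) (f g : (E → Bool) → ℝ) :
    Bexp p (fun x => f x + g x) = Bexp p f + Bexp p g := by
  simp [Bexp, mul_add, Finset.sum_add_distrib]

lemma Bexp_sub (p : E → ℝ) (f g : (E → Bool) → ℝ) :
    Bexp p (fun x => f x - g x) = Bexp p f - Bexp p g := by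
  simp [Bexp, mul_sub, Finset.sum_sub_distrib]

lemma Bexp_const_mul (p : E → ℝ) (c : ℝ) (f : (E → Bool) → ℝ) :
    Bexp p (fun x => c * f x) = c * Bexp p f := by
  simp only [Bexp, Finset.mul_sum]
  refine Finset.sum_congr rfl fun x _ => by ring

lemma Bexp_sum {ι : Type} (s : Finset ι) (p : E → ℝ) (f : ι → (E → Bool) → ℝ) :
    Bexp p (fun x => ∑ i ∈ s, f i x) = ∑ i ∈ s, Bexp p (f i) := by
  simp only [Bexp, Finset.mul_sum]
  rw [Finset.sum_comm]

lemma Bexp_marginal {E' : Type} [Fintype E'] [DecidableEq E'] (ι : E' → E) (hι : Injective ι)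
    (p : E → ℝ) (f : (E' → Bool) → ℝ) :
    Bexp p (fun x => f (fun i => x (ι i))) = Bexp (fun i => p (ι i)) f := by
  classical
  unfold Bexp
  rw [← Finset.sum_fiberwise (s := Finset.univ) (g := fun x : E → Bool => fun i => x (ι i))]
  refine Finset.sum_congr rfl fun y _ => ?_
  rw [Finset.sum_congr rfl (g := fun x => (∏ e, bw (p e) (x e)) * f y)]
  swap
  · intro x hx
    rw [Finset.mem_filter] at hx
    show _ * f (fun i => x (ι i)) = _
    rw [hx.2]
  rw [← Finset.sum_mul]
  congr 1
  have hset : (Finset.univ.filter fun x : E → Bool => (fun i => x (ι i)) = y)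
      = Fintype.piFinset (fun e => Finset.univ.filter fun b : Bool => ∀ i, ι i = e → b = y i) := by
    ext x
    simp only [Finset.mem_filter, Finset.mem_univ, true_and, Fintype.mem_piFinset]
    constructor
    · rintro h e i rfl; exact congrFun h i
    · intro h; ext i; exact h _ i rfl
  rw [hset, ← Finset.prod_univ_sum (fun e => Finset.univ.filter fun b : Bool => ∀ i, ι i = e → b = y i)
    (fun e b => bw (p e) b)]
  symm
  apply Fintype.prod_of_injective ι hι
  · intro e he
    have : (Finset.univ.filter fun b : Bool => ∀ i, ι i = e → b = y i) = Finset.univ := by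
      ext b; simp; intro i hi; exact absurd ⟨i, hi⟩ he
    rw [this]; simp [bw]
  · intro i
    have : (Finset.univ.filter fun b : Bool => ∀ j, ι j = ι i → b = y j) = {y i} := by
      ext b; simp only [Finset.mem_filter, Finset.mem_univ, true_and, Finset.mem_singleton]
      constructor
      · intro h; exact h i rfl
      · rintro rfl j hj; rw [hι hj]
    rw [this]; simp

lemma Bexp_bit (p : E → ℝ) (e : E) : Bexp p (fun x => if x e then 1 else 0) = p e := by
  have := Bexp_marginal (E' := Unit) (fun _ => e) (fun _ _ _ => rfl) p
    (fun y => if y () then (1 : ℝ) else 0)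
  rw [this]
  unfold Bexp
  rw [← Equiv.sum_comp (Equiv.funUnique Unit Bool).symm]
  simp [bw, Equiv.funUnique]

lemma Bexp_one (p : E → ℝ) : Bexp p (fun _ => 1) = 1 := by
  unfold Bexp
  simp only [mul_one]
  have := Finset.prod_univ_sum (fun _ : E => (Finset.univ : Finset Bool)) (fun e b => bw (p e) b)
  rw [Fintype.piFinset_univ] at this
  rw [← this]; simp [bw]

lemma Bexp_hasDerivAt (a b : E → ℝ) (f : (E → Bool) → ℝ) (t : ℝ) :
    HasDerivAt (fun t => Bexp (fun e => a e + t * b e) f)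
      (∑ e, b e * Bexp (fun e => a e + t * b e)
        (fun x => f (update x e true) - f (update x e false))) t := by
  have hw : ∀ (x : E → Bool) e, HasDerivAt (fun t => bw (a e + t * b e) (x e))
      (if x e then b e else - b e) t := by
    intro x e
    have h0 : HasDerivAt (fun t => a e + t * b e) (b e) t := by
      simpa using ((hasDerivAt_id t).mul_const (b e)).const_add (a e)
    unfold bw
    cases x e
    · simpa using h0.const_sub 1
    · simpa using h0
  have h1 : HasDerivAt (fun t => Bexp (fun e => a e + t * b e) f)
      (∑ x : E → Bool, (∑ e, (∏ e' ∈ Finset.univ.erase e, bw (a e' + t * b e') (x e')) •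
        (if x e then b e else - b e)) * f x) t := by
    unfold Bexp
    refine HasDerivAt.fun_sum fun x _ => ?_
    refine HasDerivAt.mul_const ?_ (f x)
    exact HasDerivAt.fun_finsetProd fun e _ => hw x e
  convert h1 using 1
  simp only [Finset.sum_mul]
  rw [Finset.sum_comm]
  refine Finset.sum_congr rfl fun e _ => ?_
  unfold Bexp
  rw [Finset.mul_sum]
  refine mul_left_cancel₀ (two_ne_zero) ?_
  rw [sum_bits_pair _ e, sum_bits_pair _ e]
  refine Finset.sum_congr rfl fun x _ => ?_
  have hP : ∀ c, (∏ e' ∈ Finset.univ.erase e, bw (a e' + t * b e') (update x e c e'))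
      = ∏ e' ∈ Finset.univ.erase e, bw (a e' + t * b e') (x e') := by
    intro c
    refine Finset.prod_congr rfl fun e' he' => ?_
    rw [update_of_ne (Finset.ne_of_mem_erase he')]
  have hQ : ∀ c, (∏ e', bw (a e' + t * b e') (update x e c e'))
      = bw (a e + t * b e) c * ∏ e' ∈ Finset.univ.erase e, bw (a e' + t * b e') (x e') := by
    intro c
    rw [← Finset.mul_prod_erase _ _ (Finset.mem_univ e), hP, update_self]
  simp only [hP, hQ, update_self, update_idem, smul_eq_mul]
  generalize (∏ e' ∈ Finset.univ.erase e, bw (a e' + t * b e') (x e')) = Q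
  simp [bw]
  ring

end PartA

section PartB

open Function Classical

/-- Edge `e = (i,j)` with `i<j` is cut by `s`. -/
def cutb {N : ℕ} (s : Finset (Fin N)) (e : Fin N × Fin N) : Prop :=
  e.1 < e.2 ∧ ¬ (e.1 ∈ s ↔ e.2 ∈ s)

/-- Cut value of a bit configuration. -/
noncomputable def cval {N : ℕ} (x : Fin N × Fin N → Bool) (s : Finset (Fin N)) : ℕ :=
  (Finset.univ.filter fun e => x e = true ∧ cutb s e).card

noncomputable def Fsup {N : ℕ} (S : Finset (Finset (Fin N))) (x : Fin N × Fin N → Bool) : ℕ :=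
  S.sup (cval x)

lemma cval_update {N : ℕ} (x : Fin N × Fin N → Bool) (s : Finset (Fin N)) (e : Fin N × Fin N) :
    cval (update x e true) s = cval (update x e false) s + if cutb s e then 1 else 0 := by
  unfold cval
  by_cases h : cutb s e
  · rw [if_pos h, ← Finset.card_insert_of_notMem (a := e)]
    · congr 1
      ext e'
      simp only [Finset.mem_filter, Finset.mem_univ, true_and, Finset.mem_insert]
      by_cases he : e' = e
      · subst he; simp [h]
      · simp [he]
    · simp
  · rw [if_neg h, add_zero]
    congr 1
    ext e'
    simp only [Finset.mem_filter, Finset.mem_univ, true_and]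
    by_cases he : e' = e
    · subst he; simp [h]
    · simp [he]

/-- The pattern of a vertex among the optimal configurations. -/
noncomputable def pat {N : ℕ} (S : Finset (Finset (Fin N))) (x : Fin N × Fin N → Bool) (i : Fin N) :
    Finset (Finset (Fin N)) :=
  S.filter fun s => cval x s = Fsup S x ∧ i ∈ s

noncomputable def Dr {N : ℕ} (S : Finset (Finset (Fin N))) (x : Fin N × Fin N → Bool)
    (e : Fin N × Fin N) : ℝ :=
  if e.1 < e.2 ∧ pat S x e.1 ≠ pat S x e.2 then 1 else 0

lemma Fsup_update_bounds {N : ℕ} (S : Finset (Finset (Fin N))) (x : Fin N × Fin N → Bool)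
    (e : Fin N × Fin N) :
    Fsup S (update x e false) ≤ Fsup S (update x e true) ∧
    Fsup S (update x e true) ≤ Fsup S (update x e false) + 1 := by
  constructor
  · refine Finset.sup_mono_fun fun s _ => ?_
    rw [cval_update]; omega
  · refine Finset.sup_le fun s hs => ?_
    rw [cval_update]
    have : cval (update x e false) s ≤ Fsup S (update x e false) :=
      Finset.le_sup (f := cval (update x e false)) hs
    split_ifs <;> omega

lemma Fsup_delta {N : ℕ} (S : Finset (Finset (Fin N))) 
    (x : Fin N × Fin N → Bool) (e : Fin N × Fin N) (hx : x e = false) :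
    (Fsup S (update x e true) : ℝ) - Fsup S (update x e false) = Dr S x e := by
  have hxx : update x e false = x := by rw [← hx]; simp
  have hb := Fsup_update_bounds S x e
  have hc := fun s => cval_update x s e
  rw [hxx] at hb hc ⊢
  unfold Dr
  by_cases h : ∃ s ∈ S, cval x s = Fsup S x ∧ cutb s e
  · obtain ⟨s, hs, h1, h2⟩ := h
    have h3 : e.1 < e.2 ∧ pat S x e.1 ≠ pat S x e.2 := by
      refine ⟨h2.1, fun heq => h2.2 ?_⟩
      have := congrArg (fun T => s ∈ T) heq
      simpa [pat, hs, h1] using this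
    rw [if_pos h3]
    have h4 : cval (update x e true) s ≤ Fsup S (update x e true) :=
      Finset.le_sup (f := cval (update x e true)) hs
    rw [hc, if_pos h2] at h4
    have : Fsup S (update x e true) = Fsup S x + 1 := by omega
    rw [this]; push_cast; ring
  · have h3 : ¬ (e.1 < e.2 ∧ pat S x e.1 ≠ pat S x e.2) := by
      rintro ⟨h4, h5⟩
      apply h5
      ext s
      simp only [pat, Finset.mem_filter]
      by_contra hne
      apply h
      by_cases hs : s ∈ S ∧ cval x s = Fsup S x
      · refine ⟨s, hs.1, hs.2, h4, ?_⟩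
        simpa [hs.1, hs.2] using hne
      · exfalso; apply hne; tauto
    rw [if_neg h3]
    have : Fsup S (update x e true) ≤ Fsup S x := by
      refine Finset.sup_le fun s hs => ?_
      rw [hc]
      have h4 : cval x s ≤ Fsup S x := Finset.le_sup (f := cval x) hs
      split_ifs with h5
      · by_contra h6
        exact h ⟨s, hs, by omega, h5⟩
      · omega
    have : Fsup S (update x e true) = Fsup S x := by omega
    rw [this]; ring

lemma Fsup_delta_close {N : ℕ} (S : Finset (Finset (Fin N)))
    (x : Fin N × Fin N → Bool) (e : Fin N × Fin N) :
    |((Fsup S (update x e true) : ℝ) - Fsup S (update x e false)) - Dr S x e|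
      ≤ if x e then 1 else 0 := by
  cases hx : x e
  · rw [Fsup_delta S x e hx]; simp
  · obtain ⟨h1, h2⟩ := Fsup_update_bounds S x e
    have h1' : (Fsup S (update x e false) : ℝ) ≤ Fsup S (update x e true) := by exact_mod_cast h1
    have h2' : (Fsup S (update x e true) : ℝ) ≤ Fsup S (update x e false) + 1 := by exact_mod_cast h2
    have h3 : 0 ≤ Dr S x e ∧ Dr S x e ≤ 1 := by unfold Dr; split_ifs <;> norm_num
    simp only [if_true]
    rw [abs_le]; constructor <;> linarith [h3.1, h3.2]

lemma psd_pattern {V T : Type} [Fintype V] (φ : V → T) (w : V → ℝ) :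
    0 ≤ ∑ i, ∑ j, if φ i = φ j then w i * w j else 0 := by
  have : (∑ i, ∑ j, if φ i = φ j then w i * w j else 0)
      = ∑ k ∈ Finset.univ.image φ, (∑ i, if φ i = k then w i else 0) ^ 2 := by
    simp only [sq, Finset.sum_mul_sum]
    rw [Finset.sum_comm' (t' := Finset.univ) (s' := fun _ => Finset.univ.image φ) (by simp)]
    refine Finset.sum_congr rfl fun i _ => ?_
    rw [Finset.sum_comm' (t' := Finset.univ) (s' := fun _ => Finset.univ.image φ) (by simp)]
    refine Finset.sum_congr rfl fun j _ => ?_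
    rw [Finset.sum_eq_single (φ i)]
    · simp [eq_comm]
    · intro k _ hk; simp [Ne.symm hk]
    · intro h; exact absurd (Finset.mem_image_of_mem _ (Finset.mem_univ _)) h
  rw [this]
  exact Finset.sum_nonneg fun k _ => sq_nonneg _

lemma sum_lt_half {N : ℕ} (h : Fin N → Fin N → ℝ) (hs : ∀ i j, h i j = h j i) (hd : ∀ i, h i i = 0) :
    ∑ e : Fin N × Fin N, (if e.1 < e.2 then h e.1 e.2 else 0) = (1 / 2) * ∑ i, ∑ j, h i j := by
  rw [Fintype.sum_prod_type]
  have h1 : ∑ i, ∑ j, h i j = (∑ i, ∑ j, if i < j then h i j else 0)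
      + ∑ i, ∑ j, if j < i then h i j else 0 := by
    rw [← Finset.sum_add_distrib]
    refine Finset.sum_congr rfl fun i _ => ?_
    rw [← Finset.sum_add_distrib]
    refine Finset.sum_congr rfl fun j _ => ?_
    rcases lt_trichotomy i j with hij | hij | hij
    · simp [hij, not_lt.mpr hij.le]
    · subst hij; simp [hd]
    · simp [hij, not_lt.mpr hij.le]
  have h2 : (∑ i, ∑ j, if j < i then h i j else 0) = ∑ i, ∑ j, if i < j then h i j else 0 := by
    rw [Finset.sum_comm]
    refine Finset.sum_congr rfl fun i _ => Finset.sum_congr rfl fun j _ => ?_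
    rw [hs]
  rw [h1, h2]; simp only []; ring

/-- truncated edge probability -/
noncomputable def pp (d N : ℕ) : ℝ := min 1 ((d : ℝ) / N)

lemma pp_nonneg (d N : ℕ) : 0 ≤ pp d N := le_min zero_le_one (by positivity)
lemma pp_le_one (d N : ℕ) : pp d N ≤ 1 := min_le_left _ _
lemma pp_le (d N : ℕ) : pp d N ≤ d / N := min_le_right _ _
lemma pp_mul_le (d N : ℕ) : N * pp d N ≤ d := by
  rcases Nat.eq_zero_or_pos N with h | h
  · subst h; simp
  · have := pp_le d N
    have h' : (0 : ℝ) < N := by exact_mod_cast h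
    calc (N : ℝ) * pp d N ≤ N * (d / N) := by gcongr
      _ = d := by field_simp

/-- block edge probabilities -/
noncomputable def uu (d N1 N2 : ℕ) (e : Fin (N1 + N2) × Fin (N1 + N2)) : ℝ :=
  if (e.1 : ℕ) < N1 then (if (e.2 : ℕ) < N1 then pp d N1 else 0)
  else (if (e.2 : ℕ) < N1 then 0 else pp d N2)

lemma uu_nonneg (d N1 N2 : ℕ) (e) : 0 ≤ uu d N1 N2 e := by
  unfold uu; split_ifs <;> simp [pp_nonneg]
lemma uu_le_one (d N1 N2 : ℕ) (e) : uu d N1 N2 e ≤ 1 := by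
  unfold uu; split_ifs <;> simp [pp_le_one]

lemma interp_pos (d N1 N2 : ℕ) (h1 : 0 < N1) (h2 : 0 < N2)
    (S : Finset (Finset (Fin (N1 + N2)))) (x : Fin (N1 + N2) × Fin (N1 + N2) → Bool) :
    0 ≤ ∑ e, (pp d (N1 + N2) - uu d N1 N2 e) * Dr S x e := by
  by_cases hN : (N1 + N2 : ℕ) ≤ d
  · refine Finset.sum_nonneg fun e _ => mul_nonneg ?_ ?_
    · have : pp d (N1 + N2) = 1 := by
        unfold pp
        apply min_eq_left
        rw [le_div_iff₀ (by positivity)]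
        rw [one_mul]; exact_mod_cast hN
      rw [this]; linarith [uu_le_one d N1 N2 e]
    · unfold Dr; split_ifs <;> norm_num
  · have h1' : (0 : ℝ) < N1 := by exact_mod_cast h1
    have h2' : (0 : ℝ) < N2 := by exact_mod_cast h2
    have hp : pp d (N1 + N2) = d / (N1 + N2) := by
      unfold pp
      push_cast
      apply min_eq_right
      rw [div_le_iff₀ (by positivity), one_mul]
      push Not at hN
      exact_mod_cast hN.le
    let w : Fin (N1 + N2) → ℝ := fun i => if (i : ℕ) < N1 then (N2 : ℝ) else -N1
    let c : ℝ := d / (N1 * N2 * (N1 + N2))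
    have hc : 0 ≤ c := by positivity
    have hb : ∀ e, -c * (w e.1 * w e.2) ≤ pp d (N1 + N2) - uu d N1 N2 e := by
      intro e
      rw [hp]
      simp only [uu, w, c]
      split_ifs
      · have := pp_le d N1
        have h3 : -((d : ℝ) / (N1 * N2 * (N1 + N2))) * (N2 * N2) = d / (N1 + N2) - d / N1 := by
          field_simp; ring
        rw [h3]; linarith
      · apply le_of_eq; field_simp; ring
      · apply le_of_eq; field_simp; ring
      · have := pp_le d N2
        have h3 : -((d : ℝ) / (N1 * N2 * (N1 + N2))) * (-N1 * -N1) = d / (N1 + N2) - d / N2 := by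
          field_simp; ring
        rw [h3]; linarith
    have hD : ∀ e, 0 ≤ Dr S x e := by intro e; unfold Dr; split_ifs <;> norm_num
    refine le_trans ?_ (Finset.sum_le_sum fun e _ => mul_le_mul_of_nonneg_right (hb e) (hD e))
    have hsw : ∑ i, w i = 0 := by
      rw [Fin.sum_univ_add]
      simp [w]; ring
    have key := sum_lt_half (fun i j => if pat S x i ≠ pat S x j then w i * w j else 0)
      (by intro i j; simp only [ne_comm, mul_comm]) (by simp)
    have hpsd : 0 ≤ ∑ i, ∑ j, if pat S x i = pat S x j then w i * w j else 0 := by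
      convert psd_pattern (pat S x) w
    have h3 : ∑ i, ∑ j, (if pat S x i ≠ pat S x j then w i * w j else 0)
        = - ∑ i, ∑ j, if pat S x i = pat S x j then w i * w j else 0 := by
      rw [eq_neg_iff_add_eq_zero, ← Finset.sum_add_distrib]
      have : ∀ i, ((∑ j, if pat S x i ≠ pat S x j then w i * w j else 0) +
          ∑ j, if pat S x i = pat S x j then w i * w j else 0) = w i * ∑ j, w j := by
        intro i
        rw [← Finset.sum_add_distrib, Finset.mul_sum]
        refine Finset.sum_congr rfl fun j _ => ?_
        by_cases h : pat S x i = pat S x j <;> simp [h]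
      simp only [this, hsw]; simp
    have h4 : ∑ e, -c * (w e.1 * w e.2) * Dr S x e
        = -c * ∑ e : Fin (N1 + N2) × Fin (N1 + N2),
          (if e.1 < e.2 then (if pat S x e.1 ≠ pat S x e.2 then w e.1 * w e.2 else 0) else 0) := by
      rw [Finset.mul_sum]
      refine Finset.sum_congr rfl fun e _ => ?_
      unfold Dr
      by_cases ha : e.1 < e.2 <;> by_cases hb : pat S x e.1 = pat S x e.2 <;> simp [ha, hb]
    rw [h4, key, h3]
    have := mul_nonneg hc hpsd
    linarith

lemma uu_sq_sum (d N1 N2 : ℕ) : ∑ e, (uu d N1 N2 e) ^ 2 ≤ 2 * (d : ℝ) ^ 2 := by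
  rw [Fintype.sum_prod_type, Fin.sum_univ_add]
  simp only [Fin.sum_univ_add]
  simp [uu]
  have h1 := pp_mul_le d N1
  have h2 := pp_mul_le d N2
  have h3 : 0 ≤ N1 * pp d N1 := mul_nonneg (by positivity) (pp_nonneg _ _)
  have h4 : 0 ≤ N2 * pp d N2 := mul_nonneg (by positivity) (pp_nonneg _ _)
  have h5 := pow_le_pow_left₀ h3 h1 2
  have h6 := pow_le_pow_left₀ h4 h2 2
  nlinarith

lemma interp_main (d N1 N2 : ℕ) (h1 : 0 < N1) (h2 : 0 < N2)
    (S : Finset (Finset (Fin (N1 + N2)))) :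
    Bexp (uu d N1 N2) (fun x => (Fsup S x : ℝ)) - 6 * (d : ℝ) ^ 2
      ≤ Bexp (fun _ => pp d (N1 + N2)) (fun x => (Fsup S x : ℝ)) := by
  let b : Fin (N1 + N2) × Fin (N1 + N2) → ℝ := fun e => pp d (N1 + N2) - uu d N1 N2 e
  let G : ℝ → ℝ := fun t => Bexp (fun e => uu d N1 N2 e + t * b e) (fun x => (Fsup S x : ℝ))
  have hG : ∀ t, HasDerivAt G _ t := fun t => Bexp_hasDerivAt (uu d N1 N2) b _ t
  have hder : ∀ t ∈ Set.Icc (0 : ℝ) 1, -(6 * (d : ℝ) ^ 2) ≤ deriv G t := by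
    intro t ht
    rw [(hG t).deriv]
    set p : Fin (N1 + N2) × Fin (N1 + N2) → ℝ := fun e => uu d N1 N2 e + t * b e with hp
    have hp0 : ∀ e, 0 ≤ p e := by
      intro e
      have : p e = (1 - t) * uu d N1 N2 e + t * pp d (N1 + N2) := by simp only [hp, b]; ring
      rw [this]
      exact add_nonneg (mul_nonneg (by linarith [ht.2]) (uu_nonneg _ _ _ _))
        (mul_nonneg ht.1 (pp_nonneg _ _))
    have hpv : ∀ e, p e ≤ pp d (N1 + N2) + uu d N1 N2 e := by
      intro e
      have : p e = (1 - t) * uu d N1 N2 e + t * pp d (N1 + N2) := by simp only [hp, b]; ring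
      rw [this]
      nlinarith [ht.1, ht.2, uu_nonneg d N1 N2 e, pp_nonneg d (N1 + N2)]
    have hp1 : ∀ e, p e ≤ 1 := by
      intro e
      have : p e = (1 - t) * uu d N1 N2 e + t * pp d (N1 + N2) := by simp only [hp, b]; ring
      rw [this]
      nlinarith [ht.1, ht.2, uu_le_one d N1 N2 e, pp_le_one d (N1 + N2)]
    have hbv : ∀ e, |b e| ≤ pp d (N1 + N2) + uu d N1 N2 e := by
      intro e
      rw [abs_le]; constructor <;> simp only [b] <;> linarith [uu_nonneg d N1 N2 e, pp_nonneg d (N1 + N2)]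
    have step : ∀ e, b e * Bexp p (fun x => (Fsup S (update x e true) : ℝ) - Fsup S (update x e false))
        ≥ Bexp p (fun x => b e * Dr S x e) - |b e| * p e := by
      intro e
      rw [← Bexp_const_mul, ← Bexp_bit p e, ← Bexp_const_mul, ← Bexp_sub]
      refine Bexp_mono hp0 hp1 fun x => ?_
      have h3 := Fsup_delta_close S x e
      have h4 : |b e * (((Fsup S (update x e true) : ℝ) - Fsup S (update x e false)) - Dr S x e)|
          ≤ |b e| * (if x e then 1 else 0) := by
        rw [abs_mul]; gcongr
      have h5 := (abs_le.mp h4).1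
      rw [mul_sub] at h5
      linarith
    have h3 := Finset.sum_le_sum fun e (_ : e ∈ Finset.univ) => step e
    refine le_trans ?_ h3
    rw [Finset.sum_sub_distrib, ← Bexp_sum]
    have h4 : 0 ≤ Bexp p (fun x => ∑ e, b e * Dr S x e) := by
      have := Bexp_mono hp0 hp1 (f := fun _ => 0) (fun x => interp_pos d N1 N2 h1 h2 S x)
      simpa [Bexp] using this
    have h5 : ∑ e, |b e| * p e ≤ 6 * (d : ℝ) ^ 2 := by
      calc ∑ e, |b e| * p e ≤ ∑ e, (2 * (pp d (N1 + N2)) ^ 2 + 2 * (uu d N1 N2 e) ^ 2) := by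
            refine Finset.sum_le_sum fun e _ => ?_
            have h6 : |b e| * p e ≤ (pp d (N1 + N2) + uu d N1 N2 e) * (pp d (N1 + N2) + uu d N1 N2 e) :=
              mul_le_mul (hbv e) (hpv e) (hp0 e) (add_nonneg (pp_nonneg _ _) (uu_nonneg _ _ _ _))
            nlinarith [sq_nonneg (pp d (N1 + N2) - uu d N1 N2 e)]
        _ ≤ _ := by
            rw [Finset.sum_add_distrib, ← Finset.mul_sum]
            have h7 := uu_sq_sum d N1 N2
            have h8 := pp_mul_le d (N1 + N2)
            have h9 : 0 ≤ ((N1 + N2 : ℕ) : ℝ) * pp d (N1 + N2) := mul_nonneg (by positivity) (pp_nonneg _ _)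
            have h10 := pow_le_pow_left₀ h9 h8 2
            have h11 : ∑ e : Fin (N1 + N2) × Fin (N1 + N2), (pp d (N1 + N2)) ^ 2 = (((N1 + N2 : ℕ) : ℝ) * pp d (N1 + N2)) ^ 2 := by
              simp; ring
            rw [h11]
            rw [← Finset.mul_sum]
            linarith
    linarith
  have hmv := (convex_Icc (0 : ℝ) 1).mul_sub_le_image_sub_of_le_deriv (f := G)
    (fun t _ => (hG t).continuousAt.continuousWithinAt)
    (fun t _ => (hG t).differentiableAt.differentiableWithinAt)
    (fun t ht => hder t (interior_subset ht)) 0 (by simp) 1 (by simp) zero_le_one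
  have e0 : G 0 = Bexp (uu d N1 N2) (fun x => (Fsup S x : ℝ)) := by simp [G]
  have e1 : G 1 = Bexp (fun _ => pp d (N1 + N2)) (fun x => (Fsup S x : ℝ)) := by simp [G, b]
  rw [e0, e1] at hmv
  linarith

/-- The truncated model expectation. -/
noncomputable def aN (d N k : ℕ) : ℝ :=
  Bexp (fun _ : Fin N × Fin N => pp d N)
    (fun x => (Fsup (Finset.powersetCard k Finset.univ) x : ℝ))

lemma pc_nonempty {N k : ℕ} (h : k ≤ N) :
    (Finset.powersetCard k (Finset.univ : Finset (Fin N))).Nonempty := by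
  apply Finset.powersetCard_nonempty_of_le; simpa using h

lemma Fsup_attained {N : ℕ} (S : Finset (Finset (Fin N))) (hS : S.Nonempty) (x) :
    ∃ s ∈ S, Fsup S x = cval x s := Finset.exists_mem_eq_sup S hS (cval x)

lemma Fsup_split {N1 N2 k1 k2 : ℕ} (h1 : k1 ≤ N1) (h2 : k2 ≤ N2)
    (x : Fin (N1 + N2) × Fin (N1 + N2) → Bool) :
    Fsup (Finset.powersetCard k1 Finset.univ)
      (fun e : Fin N1 × Fin N1 => x (Fin.castAdd N2 e.1, Fin.castAdd N2 e.2)) +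
    Fsup (Finset.powersetCard k2 Finset.univ)
      (fun e : Fin N2 × Fin N2 => x (Fin.natAdd N1 e.1, Fin.natAdd N1 e.2)) ≤
    Fsup (Finset.powersetCard (k1 + k2) Finset.univ) x := by
  obtain ⟨s1, hs1, e1⟩ := Fsup_attained _ (pc_nonempty h1)
    (fun e : Fin N1 × Fin N1 => x (Fin.castAdd N2 e.1, Fin.castAdd N2 e.2))
  obtain ⟨s2, hs2, e2⟩ := Fsup_attained _ (pc_nonempty h2)
    (fun e : Fin N2 × Fin N2 => x (Fin.natAdd N1 e.1, Fin.natAdd N1 e.2))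
  rw [e1, e2]
  have hs1' := (Finset.mem_powersetCard.mp hs1).2
  have hs2' := (Finset.mem_powersetCard.mp hs2).2
  let s : Finset (Fin (N1 + N2)) := Finset.univ.filter fun i =>
    Fin.addCases (motive := fun _ => Prop) (fun i1 => i1 ∈ s1) (fun i2 => i2 ∈ s2) i
  have hm1 : ∀ i, Fin.castAdd N2 i ∈ s ↔ i ∈ s1 := by intro i; simp [s]
  have hm2 : ∀ i, Fin.natAdd N1 i ∈ s ↔ i ∈ s2 := by intro i; simp [s]
  have hsu : s = s1.map (Fin.castAddEmb N2) ∪ s2.map (Fin.natAddEmb N1) := by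
    ext i
    refine Fin.addCases (fun i => ?_) (fun i => ?_) i
    · rw [hm1]
      simp only [Finset.mem_union, Finset.mem_map, Fin.castAddEmb_apply, Fin.natAddEmb_apply]
      constructor
      · intro h; exact Or.inl ⟨i, h, rfl⟩
      · rintro (⟨j, hj, hij⟩ | ⟨j, hj, hij⟩)
        · rwa [← Fin.castAdd_injective _ _ hij]
        · exfalso
          have := congrArg Fin.val hij; simp at this; omega
    · rw [hm2]
      simp only [Finset.mem_union, Finset.mem_map, Fin.castAddEmb_apply, Fin.natAddEmb_apply]
      constructor
      · intro h; exact Or.inr ⟨i, h, rfl⟩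
      · rintro (⟨j, hj, hij⟩ | ⟨j, hj, hij⟩)
        · exfalso
          have := congrArg Fin.val hij; simp at this; omega
        · rwa [← Fin.natAdd_injective _ _ hij]
  have hdis : Disjoint (s1.map (Fin.castAddEmb N2)) (s2.map (Fin.natAddEmb N1)) := by
    rw [Finset.disjoint_left]
    intro i hi hj
    simp only [Finset.mem_map, Fin.castAddEmb_apply, Fin.natAddEmb_apply] at hi hj
    obtain ⟨a, _, rfl⟩ := hi
    obtain ⟨b, _, hb⟩ := hj
    have := congrArg Fin.val hb; simp at this; omega
  have hcard : s.card = k1 + k2 := by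
    rw [hsu, Finset.card_union_of_disjoint hdis]; simp [hs1', hs2']
  refine le_trans ?_ (Finset.le_sup (f := cval x) (Finset.mem_powersetCard.mpr
    ⟨Finset.subset_univ s, hcard⟩))
  unfold cval
  let ι1 : Fin N1 × Fin N1 ↪ Fin (N1 + N2) × Fin (N1 + N2) :=
    (Fin.castAddEmb N2).prodMap (Fin.castAddEmb N2)
  let ι2 : Fin N2 × Fin N2 ↪ Fin (N1 + N2) × Fin (N1 + N2) :=
    (Fin.natAddEmb N1).prodMap (Fin.natAddEmb N1)
  rw [← Finset.card_map ι1, ← Finset.card_map ι2, ← Finset.card_union_of_disjoint]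
  · apply Finset.card_le_card
    intro e he
    rw [Finset.mem_union, Finset.mem_map, Finset.mem_map] at he
    rcases he with ⟨⟨i, j⟩, h, rfl⟩ | ⟨⟨i, j⟩, h, rfl⟩
    · rw [Finset.mem_filter] at h ⊢
      simp only [Finset.mem_univ, true_and, cutb] at h ⊢
      simp only [ι1, Function.Embedding.prodMap, Function.Embedding.coeFn_mk, Prod.map,
        Fin.castAddEmb_apply, hm1]
      exact h
    · rw [Finset.mem_filter] at h ⊢
      simp only [Finset.mem_univ, true_and, cutb] at h ⊢
      simp only [ι2, Function.Embedding.prodMap, Function.Embedding.coeFn_mk, Prod.map,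
        Fin.natAddEmb_apply, hm2]
      simpa using h
  · rw [Finset.disjoint_left]
    intro e hi hj
    rw [Finset.mem_map] at hi hj
    obtain ⟨a, _, rfl⟩ := hi
    obtain ⟨b, _, hb⟩ := hj
    have := congrArg (fun e : Fin (N1 + N2) × Fin (N1 + N2) => (e.1 : ℕ)) hb
    simp [ι1, ι2] at this; omega

lemma aN_superadd (d N1 N2 k1 k2 : ℕ) (h1 : k1 ≤ N1) (h2 : k2 ≤ N2) (h1' : 0 < N1) (h2' : 0 < N2) :
    aN d N1 k1 + aN d N2 k2 - 6 * (d : ℝ) ^ 2 ≤ aN d (N1 + N2) (k1 + k2) := by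
  have h := interp_main d N1 N2 h1' h2' (Finset.powersetCard (k1 + k2) Finset.univ)
  refine le_trans ?_ h
  apply sub_le_sub_right
  have hm1 := Bexp_marginal (fun e : Fin N1 × Fin N1 => (Fin.castAdd N2 e.1, Fin.castAdd N2 e.2))
    (by intro a b hab; simpa [Prod.ext_iff] using hab) (uu d N1 N2)
    (fun x => (Fsup (Finset.powersetCard k1 Finset.univ) x : ℝ))
  have hm2 := Bexp_marginal (fun e : Fin N2 × Fin N2 => (Fin.natAdd N1 e.1, Fin.natAdd N1 e.2))
    (by intro a b hab; simpa [Prod.ext_iff] using hab) (uu d N1 N2)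
    (fun x => (Fsup (Finset.powersetCard k2 Finset.univ) x : ℝ))
  have hu1 : (fun e : Fin N1 × Fin N1 => uu d N1 N2 (Fin.castAdd N2 e.1, Fin.castAdd N2 e.2))
      = fun _ => pp d N1 := by ext e; simp [uu]
  have hu2 : (fun e : Fin N2 × Fin N2 => uu d N1 N2 (Fin.natAdd N1 e.1, Fin.natAdd N1 e.2))
      = fun _ => pp d N2 := by ext e; simp [uu]
  rw [hu1] at hm1
  rw [hu2] at hm2
  unfold aN
  rw [← hm1, ← hm2, ← Bexp_add]
  refine Bexp_mono (uu_nonneg d N1 N2) (uu_le_one d N1 N2) fun x => ?_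
  exact_mod_cast Fsup_split h1 h2 x

lemma aN_le (d N k : ℕ) : aN d N k ≤ d * N := by
  have h : ∀ x : Fin N × Fin N → Bool, (Fsup (Finset.powersetCard k Finset.univ) x : ℝ)
      ≤ ∑ e, (if x e then (1 : ℝ) else 0) := by
    intro x
    have : Fsup (Finset.powersetCard k Finset.univ) x ≤ ∑ e, (if x e then 1 else 0) := by
      refine Finset.sup_le fun s _ => ?_
      rw [← Finset.card_filter]
      apply Finset.card_le_card
      intro e; simp; tauto
    exact_mod_cast this
  refine (Bexp_mono (fun _ => pp_nonneg d N) (fun _ => pp_le_one d N) h).trans ?_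
  rw [Bexp_sum]
  simp only [Bexp_bit]
  have := pp_mul_le d N
  simp
  have hN : (0 : ℝ) ≤ N := by positivity
  nlinarith

lemma aN_nonneg (d N k : ℕ) : 0 ≤ aN d N k := by
  have := Bexp_mono (p := fun _ : Fin N × Fin N => pp d N) (fun _ => pp_nonneg d N)
    (fun _ => pp_le_one d N) (f := fun _ => 0)
    (g := fun x => (Fsup (Finset.powersetCard k Finset.univ) x : ℝ)) (fun x => by positivity)
  simpa [Bexp, aN] using this

lemma aN_zero (d k : ℕ) : aN d 0 k ≤ 0 := by simpa using aN_le d 0 k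

lemma aN_limit (d P q : ℕ) (hPq : P ≤ q) (hq : 0 < q) :
    ∃ l : ℝ, Filter.Tendsto (fun m : ℕ => aN d (q * m) (P * m) / m) Filter.atTop (nhds l) := by
  let u : ℕ → ℝ := fun m => 6 * (d : ℝ) ^ 2 - aN d (q * m) (P * m)
  have hu : Subadditive u := by
    intro m n
    rcases Nat.eq_zero_or_pos m with rfl | hm
    · simp only [u, zero_add, mul_zero]
      nlinarith [aN_zero d 0]
    rcases Nat.eq_zero_or_pos n with rfl | hn
    · simp only [u, add_zero, mul_zero]
      nlinarith [aN_zero d 0]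
    have := aN_superadd d (q * m) (q * n) (P * m) (P * n) (by gcongr) (by gcongr)
      (by positivity) (by positivity)
    simp only [u, mul_add]
    linarith
  have hb : BddBelow (Set.range fun n => u n / n) := by
    refine ⟨-(d * q), ?_⟩
    rintro _ ⟨n, rfl⟩
    rcases Nat.eq_zero_or_pos n with rfl | hn
    · simp; positivity
    have hn' : (0 : ℝ) < n := by exact_mod_cast hn
    simp only [u]
    rw [le_div_iff₀ hn']
    have := aN_le d (q * n) (P * n)
    push_cast at this
    nlinarith [sq_nonneg (d : ℝ)]
  have ht := hu.tendsto_lim hb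
  refine ⟨-hu.lim, ?_⟩
  have h0 : Filter.Tendsto (fun m : ℕ => (6 * (d : ℝ) ^ 2) / m) Filter.atTop (nhds 0) :=
    tendsto_const_div_atTop_nhds_zero_nat _
  have := h0.sub ht
  simp only [zero_sub] at this
  refine this.congr fun m => ?_
  simp only [u]; ring

end PartB

section PartC

open Function Classical

/-- The graph of a bit configuration. -/
def Gx {N : ℕ} (x : Fin N × Fin N → Bool) : SimpleGraph (Fin N) where
  Adj i j := (i < j ∧ x (i, j) = true) ∨ (j < i ∧ x (j, i) = true)
  symm := ⟨fun i j h => h.symm⟩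
  loopless := ⟨fun i h => by rcases h with h | h <;> exact lt_irrefl _ h.1⟩

lemma Gx_adj_lt {N : ℕ} (x : Fin N × Fin N → Bool) {i j : Fin N} (h : i < j) :
    (Gx x).Adj i j ↔ x (i, j) = true := by
  simp [Gx, h, not_lt.mpr h.le]

lemma Gx_eq_iff {N : ℕ} (x : Fin N × Fin N → Bool) (G : SimpleGraph (Fin N)) :
    Gx x = G ↔ ∀ e : Fin N × Fin N, e.1 < e.2 → (x e = true ↔ G.Adj e.1 e.2) := by
  constructor
  · rintro rfl e he
    rw [Gx_adj_lt x he]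
  · intro h
    ext i j
    rcases lt_trichotomy i j with hij | hij | hij
    · rw [Gx_adj_lt x hij]; exact h (i, j) hij
    · subst hij; simp
    · rw [SimpleGraph.adj_comm, Gx_adj_lt x hij, G.adj_comm]; exact h (j, i) hij

lemma numEdges_eq {N : ℕ} (G : SimpleGraph (Fin N)) :
    numEdges G = (Finset.univ.filter fun e : Fin N × Fin N => e.1 < e.2 ∧ G.Adj e.1 e.2).card := by
  unfold numEdges
  rw [Nat.card_eq_fintype_card, ← SimpleGraph.edgeFinset_card]
  symm
  refine Finset.card_bij (fun e _ => s(e.1, e.2)) ?_ ?_ ?_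
  · intro e he
    rw [SimpleGraph.mem_edgeFinset, SimpleGraph.mem_edgeSet]
    exact (Finset.mem_filter.mp he).2.2
  · rintro ⟨i, j⟩ h1 ⟨i', j'⟩ h2 h
    have h1 := (Finset.mem_filter.mp h1).2.1
    have h2 := (Finset.mem_filter.mp h2).2.1
    simp only [Sym2.eq, Sym2.rel_iff', Prod.mk.injEq, Prod.swap_prod_mk] at h h1 h2
    rcases h with ⟨rfl, rfl⟩ | ⟨rfl, rfl⟩
    · rfl
    · exact absurd h1 (not_lt.mpr h2.le)
  · intro e he
    induction e with | _ i j
    rw [SimpleGraph.mem_edgeFinset, SimpleGraph.mem_edgeSet] at he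
    rcases lt_trichotomy i j with hij | hij | hij
    · exact ⟨(i, j), by simp [hij, he], rfl⟩
    · subst hij; exact absurd he (G.loopless.irrefl i)
    · exact ⟨(j, i), by simp [hij, he.symm], Sym2.eq_swap⟩

lemma card_lt_pairs (N : ℕ) :
    (Finset.univ.filter fun e : Fin N × Fin N => e.1 < e.2).card = N.choose 2 := by
  have h := numEdges_eq (⊤ : SimpleGraph (Fin N))
  have h2 : numEdges (⊤ : SimpleGraph (Fin N)) = N.choose 2 := by
    unfold numEdges
    rw [Nat.card_eq_fintype_card, ← SimpleGraph.edgeFinset_card]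
    rw [SimpleGraph.card_edgeFinset_top_eq_card_choose_two]; simp
  rw [h2] at h
  rw [h]
  congr 1
  ext e
  simp only [Finset.mem_filter, Finset.mem_univ, true_and, SimpleGraph.top_adj]
  constructor
  · intro h; exact ⟨h, h.ne⟩
  · exact fun h => h.1

lemma erExp_eq_Bexp (N : ℕ) (p : ℝ) (f : SimpleGraph (Fin N) → ℝ) :
    erExp N p f = Bexp (fun _ : Fin N × Fin N => p) (fun x => f (Gx x)) := by
  unfold Bexp erExp
  rw [← Finset.sum_fiberwise (s := Finset.univ) (g := fun x : Fin N × Fin N → Bool => Gx x)]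
  refine Finset.sum_congr rfl fun G _ => ?_
  rw [Finset.sum_congr rfl (g := fun x => (∏ e, bw p (x e)) * f G)]
  swap
  · intro x hx
    rw [Finset.mem_filter] at hx
    show _ * f (Gx x) = _
    rw [hx.2]
  rw [← Finset.sum_mul]
  congr 1
  have hset : (Finset.univ.filter fun x : Fin N × Fin N → Bool => Gx x = G)
      = Fintype.piFinset (fun e => Finset.univ.filter fun b : Bool =>
        e.1 < e.2 → (b = true ↔ G.Adj e.1 e.2)) := by
    ext x
    simp only [Finset.mem_filter, Finset.mem_univ, true_and, Fintype.mem_piFinset, Gx_eq_iff]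
  rw [hset, ← Finset.prod_univ_sum (fun e : Fin N × Fin N => Finset.univ.filter fun b : Bool =>
        e.1 < e.2 → (b = true ↔ G.Adj e.1 e.2)) (fun _ b => bw p b)]
  have hfac : ∀ e : Fin N × Fin N, (∑ b ∈ (Finset.univ.filter fun b : Bool =>
        e.1 < e.2 → (b = true ↔ G.Adj e.1 e.2)), bw p b)
      = (if e.1 < e.2 ∧ G.Adj e.1 e.2 then p else 1)
        * (if e.1 < e.2 ∧ ¬ G.Adj e.1 e.2 then 1 - p else 1) := by
    intro e
    rw [Finset.sum_filter]
    by_cases h1 : e.1 < e.2 <;> by_cases h2 : G.Adj e.1 e.2 <;> simp [h1, h2, bw]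
  simp only [hfac]
  rw [Finset.prod_mul_distrib, Finset.prod_ite, Finset.prod_ite]
  simp only [Finset.prod_const, one_pow, mul_one]
  rw [← numEdges_eq]
  congr 2
  have h3 : (Finset.univ.filter fun e : Fin N × Fin N => e.1 < e.2).card
      = (Finset.univ.filter fun e : Fin N × Fin N => e.1 < e.2 ∧ G.Adj e.1 e.2).card
      + (Finset.univ.filter fun e : Fin N × Fin N => e.1 < e.2 ∧ ¬ G.Adj e.1 e.2).card := by
    rw [← Finset.card_union_of_disjoint]
    · congr 1
      ext e
      simp only [Finset.mem_filter, Finset.mem_univ, true_and, Finset.mem_union]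
      tauto
    · rw [Finset.disjoint_left]
      intro e
      simp only [Finset.mem_filter, Finset.mem_univ, true_and]
      tauto
  rw [card_lt_pairs, ← numEdges_eq] at h3
  omega

lemma cutCount_eq {N : ℕ} (x : Fin N × Fin N → Bool) (s : Finset (Fin N)) :
    cutCount (Gx x) s = cval x s := by
  unfold cutCount cval
  rw [Nat.card_eq_fintype_card, Fintype.card_subtype]
  refine Finset.card_bij (fun e _ => if e.1 < e.2 then e else e.swap) ?_ ?_ ?_
  · rintro ⟨i, j⟩ h
    rw [Finset.mem_filter] at h ⊢
    obtain ⟨-, h1, h2, h3⟩ := h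
    simp only at h1 h2 h3
    refine ⟨Finset.mem_univ _, ?_⟩
    rcases lt_trichotomy i j with hij | hij | hij
    · rw [Gx_adj_lt x hij] at h3
      simp [hij, cutb, h1, h2, h3]
    · subst hij; contradiction
    · rw [SimpleGraph.adj_comm, Gx_adj_lt x hij] at h3
      simp [hij, not_lt.mpr hij.le, cutb, h1, h2, h3]
  · rintro ⟨i, j⟩ h1 ⟨i', j'⟩ h2 h
    rw [Finset.mem_filter] at h1 h2
    obtain ⟨-, h1, h1', -⟩ := h1
    obtain ⟨-, h2, h2', -⟩ := h2
    simp only at h h1 h1' h2 h2'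
    split_ifs at h
    · exact h
    · simp only [Prod.swap_prod_mk, Prod.mk.injEq] at h
      rw [h.1] at h1; contradiction
    · simp only [Prod.swap_prod_mk, Prod.mk.injEq] at h
      rw [h.2] at h1; contradiction
    · exact Prod.swap_injective h
  · rintro ⟨i, j⟩ h
    rw [Finset.mem_filter] at h
    obtain ⟨-, h1, h2, h3⟩ := h
    simp only at h1 h2 h3
    by_cases hi : i ∈ s
    · have hj : j ∉ s := by tauto
      refine ⟨(i, j), ?_, by simp [h2]⟩
      rw [Finset.mem_filter]
      exact ⟨Finset.mem_univ _, hi, hj, (Gx_adj_lt x h2).mpr h1⟩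
    · have hj : j ∈ s := by tauto
      refine ⟨(j, i), ?_, by simp [not_lt.mpr h2.le]⟩
      rw [Finset.mem_filter]
      exact ⟨Finset.mem_univ _, hj, hi, ((Gx_adj_lt x h2).mpr h1).symm⟩

lemma er_mcut_eq (α : ℚ) (N k : ℕ) (hk : α * (N : ℚ) = k) (p : ℝ) :
    erExp N p (fun G => (mcut α G : ℝ)) =
      Bexp (fun _ : Fin N × Fin N => p)
        (fun x => (Fsup (Finset.powersetCard k Finset.univ) x : ℝ)) := by
  rw [erExp_eq_Bexp]
  congr 1
  ext x
  unfold mcut Fsup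
  rw [hk]
  simp only [Nat.floor_natCast, cutCount_eq]

lemma cval_true {N : ℕ} (s : Finset (Fin N)) :
    cval (fun _ => true) s = s.card * (N - s.card) := by
  rw [← cutCount_eq]
  unfold cutCount
  rw [Nat.card_eq_fintype_card, Fintype.card_subtype]
  have : (Finset.univ.filter fun p : Fin N × Fin N =>
      p.1 ∈ s ∧ p.2 ∉ s ∧ (Gx fun _ => true).Adj p.1 p.2) = s ×ˢ sᶜ := by
    ext ⟨i, j⟩
    simp only [Finset.mem_filter, Finset.mem_univ, true_and, Finset.mem_product, Finset.mem_compl]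
    constructor
    · tauto
    · rintro ⟨h1, h2⟩
      refine ⟨h1, h2, ?_⟩
      have : i ≠ j := by rintro rfl; contradiction
      simpa [Gx] using this
  rw [this, Finset.card_product, Finset.card_compl, Fintype.card_fin]

/-- real cut indicator -/
noncomputable def cI {N : ℕ} (s : Finset (Fin N)) (e : Fin N × Fin N) : ℝ := if cutb s e then 1 else 0

lemma cval_real {N : ℕ} (x : Fin N × Fin N → Bool) (s : Finset (Fin N)) :
    (cval x s : ℝ) = ∑ e, (if x e then (1 : ℝ) else 0) * cI s e := by
  unfold cval cI
  rw [Finset.card_filter]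
  push_cast
  refine Finset.sum_congr rfl fun e _ => ?_
  by_cases h1 : x e = true <;> by_cases h2 : cutb s e <;> simp [h1, h2]

lemma sum_cI {N k : ℕ} (s : Finset (Fin N)) (hs : s ∈ Finset.powersetCard k Finset.univ) :
    ∑ e, cI s e = k * ((N : ℝ) - k) := by
  have h := cval_real (fun _ => true) s
  have hc := (Finset.mem_powersetCard.mp hs).2
  have hle : k ≤ N := by rw [← hc]; simpa using Finset.card_le_univ s
  rw [cval_true, hc] at h
  simp only [if_true, one_mul] at h
  rw [← h]; push_cast [Nat.cast_sub hle]; ring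

/-- max of linear functional -/
noncomputable def Mr {N : ℕ} (S : Finset (Finset (Fin N))) (hS : S.Nonempty) (y : Fin N × Fin N → ℝ) : ℝ :=
  S.sup' hS fun s => ∑ e, y e * cI s e

lemma Fsup_real {N : ℕ} (S : Finset (Finset (Fin N))) (hS : S.Nonempty) (x) :
    (Fsup S x : ℝ) = Mr S hS (fun e => if x e then 1 else 0) := by
  unfold Fsup Mr
  rw [← Finset.sup'_eq_sup hS, Nat.cast_finsetSup']
  simp only [cval_real]

/-- Affine normalisation of the cut maximum. -/
lemma Fsup_norm {N k : ℕ} (hS : (Finset.powersetCard k (Finset.univ : Finset (Fin N))).Nonempty)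
    (x : Fin N × Fin N → Bool) (p c : ℝ) (hc : 0 < c) :
    ((Fsup (Finset.powersetCard k Finset.univ) x : ℝ) - p * (k * ((N : ℝ) - k))) / c
      = Mr _ hS (fun e => ((if x e then (1 : ℝ) else 0) - p) / c) := by
  rw [Fsup_real _ hS]
  unfold Mr
  have h : ∀ s ∈ Finset.powersetCard k (Finset.univ : Finset (Fin N)),
      ∑ e, ((if x e then (1 : ℝ) else 0) - p) / c * cI s e
      = (∑ e, (if x e then (1 : ℝ) else 0) * cI s e - p * (k * ((N : ℝ) - k))) / c := by
    intro s hs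
    rw [← sum_cI s hs, Finset.mul_sum, ← Finset.sum_sub_distrib, Finset.sum_div]
    refine Finset.sum_congr rfl fun e _ => by ring
  rw [Finset.sup'_congr hS rfl h]
  apply le_antisymm
  · rw [div_le_iff₀ hc, sub_le_iff_le_add]
    apply Finset.sup'_le
    intro s hs
    rw [← sub_le_iff_le_add, ← div_le_iff₀ hc]
    exact Finset.le_sup' (fun s => (∑ e, (if x e then (1 : ℝ) else 0) * cI s e - p * (k * ((N : ℝ) - k))) / c) hs
  · apply Finset.sup'_le
    intro s hs
    gcongr
    exact Finset.le_sup' (fun s => ∑ e, (if x e then (1 : ℝ) else 0) * cI s e) hs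

end PartC

section PartD

open Function Classical MeasureTheory ProbabilityTheory

lemma taylor3 (f f1 f2 f3 : ℝ → ℝ) (K : ℝ) (h0 : ∀ t, HasDerivAt f (f1 t) t)
    (h1 : ∀ t, HasDerivAt f1 (f2 t) t) (h2 : ∀ t, HasDerivAt f2 (f3 t) t)
    (hK : ∀ t, |f3 t| ≤ K) (t : ℝ) :
    |f t - (f 0 + f1 0 * t + f2 0 / 2 * t ^ 2)| ≤ K * |t| ^ 3 := by
  have hK0 : 0 ≤ K := le_trans (abs_nonneg _) (hK 0)
  have e2 : ∀ t, |f2 t - f2 0| ≤ K * |t| := by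
    intro t
    have := (convex_univ).norm_image_sub_le_of_norm_hasDerivWithin_le (f := f2) (f' := f3) (C := K)
      (fun x _ => (h2 x).hasDerivWithinAt) (fun x _ => by simpa using hK x)
      (Set.mem_univ 0) (Set.mem_univ t)
    simpa using this
  have seg : ∀ t x : ℝ, x ∈ Set.uIcc 0 t → |x| ≤ |t| := by
    intro t x hx
    have := Set.abs_sub_left_of_mem_uIcc hx
    simpa using this
  have e1 : ∀ t, |f1 t - (f1 0 + f2 0 * t)| ≤ K * |t| ^ 2 := by
    intro t
    have hd : ∀ x, HasDerivAt (fun x => f1 x - f2 0 * x) (f2 x - f2 0) x := by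
      intro x
      simpa using (h1 x).fun_sub ((hasDerivAt_id' x).const_mul (f2 0))
    have := (convex_uIcc 0 t).norm_image_sub_le_of_norm_hasDerivWithin_le
      (f := fun x => f1 x - f2 0 * x) (f' := fun x => f2 x - f2 0) (C := K * |t|)
      (fun x _ => (hd x).hasDerivWithinAt)
      (fun x hx => by
        rw [Real.norm_eq_abs]
        exact (e2 x).trans (mul_le_mul_of_nonneg_left (seg t x hx) hK0))
      Set.left_mem_uIcc Set.right_mem_uIcc
    simp only [Real.norm_eq_abs] at this
    convert this using 1
    · congr 1; ring
    · rw [sub_zero]; ring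
  have hd : ∀ x, HasDerivAt (fun x => f x - f1 0 * x - f2 0 / 2 * x ^ 2)
      (f1 x - (f1 0 + f2 0 * x)) x := by
    intro x
    have := ((h0 x).fun_sub ((hasDerivAt_id' x).const_mul (f1 0))).fun_sub
      ((hasDerivAt_pow 2 x).const_mul (f2 0 / 2))
    refine this.congr_deriv ?_
    simp; ring
  have := (convex_uIcc 0 t).norm_image_sub_le_of_norm_hasDerivWithin_le
    (f := fun x => f x - f1 0 * x - f2 0 / 2 * x ^ 2) (f' := fun x => f1 x - (f1 0 + f2 0 * x))
    (C := K * |t| ^ 2)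
    (fun x _ => (hd x).hasDerivWithinAt)
    (fun x hx => by
      rw [Real.norm_eq_abs]
      refine (e1 x).trans ?_
      exact mul_le_mul_of_nonneg_left (pow_le_pow_left₀ (abs_nonneg _) (seg t x hx) 2) hK0)
    Set.left_mem_uIcc Set.right_mem_uIcc
  simp only [Real.norm_eq_abs] at this
  convert this using 1
  · congr 1; ring
  · rw [sub_zero]; ring

/-- One-dimensional comparison. -/
lemma one_dim (β A B : ℝ) (hβ : 0 < β) (hA : 0 ≤ A) (hB : 0 ≤ B) (hAB : 0 < A + B)
    (μ ν : Measure ℝ) [IsProbabilityMeasure μ] [IsProbabilityMeasure ν]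
    (hμ : MemLp id 3 μ) (hν : MemLp id 3 ν) (mμ : ∫ t, t ∂μ = 0) (mν : ∫ t, t ∂ν = 0) :
    |(∫ t, (1 / β) * Real.log (A + B * Real.exp (β * t)) ∂μ)
      - ∫ t, (1 / β) * Real.log (A + B * Real.exp (β * t)) ∂ν|
      ≤ β * |(∫ t, t ^ 2 ∂μ) - ∫ t, t ^ 2 ∂ν| + β ^ 2 * ((∫ t, |t| ^ 3 ∂μ) + ∫ t, |t| ^ 3 ∂ν) := by
  let Q : ℝ → ℝ := fun t => A + B * Real.exp (β * t)
  have hQ : ∀ t, 0 < Q t := by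
    intro t
    rcases hA.lt_or_eq with h | h
    · have := Real.exp_pos (β * t); simp only [Q]; positivity
    · have hB' : 0 < B := by linarith
      have := Real.exp_pos (β * t); simp only [Q]; positivity
  let s : ℝ → ℝ := fun t => B * Real.exp (β * t) / Q t
  have hs0 : ∀ t, 0 ≤ s t := fun t => div_nonneg (by positivity) (hQ t).le
  have hs1 : ∀ t, s t ≤ 1 := fun t => by
    simp only [s]; rw [div_le_one (hQ t)]; simp only [Q]; linarith
  let f : ℝ → ℝ := fun t => (1 / β) * Real.log (Q t)
  have hE : ∀ t, HasDerivAt (fun t => B * Real.exp (β * t)) (β * (B * Real.exp (β * t))) t := by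
    intro t
    have : HasDerivAt (fun t => β * t) β t := by simpa using (hasDerivAt_id t).const_mul β
    refine ((this.exp).const_mul B).congr_deriv ?_; ring
  have hQd : ∀ t, HasDerivAt Q (β * (B * Real.exp (β * t))) t := fun t => (hE t).const_add A
  have h0 : ∀ t, HasDerivAt f (s t) t := by
    intro t
    have := ((hQd t).log (hQ t).ne').const_mul (1 / β)
    refine this.congr_deriv ?_
    simp only [s]; field_simp
  have h1 : ∀ t, HasDerivAt s (β * (s t * (1 - s t))) t := by
    intro t
    have := (hE t).div (hQd t) (hQ t).ne'
    refine this.congr_deriv ?_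
    have := (hQ t).ne'
    simp only [s]; field_simp
  have h2 : ∀ t, HasDerivAt (fun t => β * (s t * (1 - s t))) (β ^ 2 * (s t * (1 - s t) * (1 - 2 * s t))) t := by
    intro t
    have := ((h1 t).mul ((h1 t).const_sub 1)).const_mul β
    refine this.congr_deriv ?_
    ring
  have hss : ∀ t, |s t * (1 - s t)| ≤ 1 := by
    intro t
    rw [abs_mul, abs_of_nonneg (hs0 t), abs_of_nonneg (by linarith [hs1 t])]
    nlinarith [hs0 t, hs1 t]
  have hK : ∀ t, |β ^ 2 * (s t * (1 - s t) * (1 - 2 * s t))| ≤ β ^ 2 := by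
    intro t
    rw [abs_mul, abs_of_nonneg (by positivity), abs_mul]
    have h5 : |1 - 2 * s t| ≤ 1 := by rw [abs_le]; constructor <;> linarith [hs0 t, hs1 t]
    have h6 : |s t * (1 - s t)| * |1 - 2 * s t| ≤ 1 := by
      nlinarith [hss t, abs_nonneg (s t * (1 - s t)), abs_nonneg (1 - 2 * s t)]
    nlinarith [sq_nonneg β]
  have hT := taylor3 f s _ _ (β ^ 2) h0 h1 h2 hK
  set g2 := β * (s 0 * (1 - s 0)) with hg2
  have hg2' : |g2| ≤ β := by
    rw [hg2, abs_mul, abs_of_pos hβ]; nlinarith [hss 0]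
  have hfc : Continuous f := continuous_iff_continuousAt.mpr fun t => (h0 t).continuousAt
  have main : ∀ (ρ : Measure ℝ) [IsProbabilityMeasure ρ], MemLp id 3 ρ → (∫ t, t ∂ρ = 0) →
      |(∫ t, f t ∂ρ) - (f 0 + g2 / 2 * ∫ t, t ^ 2 ∂ρ)| ≤ β ^ 2 * ∫ t, |t| ^ 3 ∂ρ := by
    intro ρ _ hρ mρ
    have i1 : Integrable (fun t : ℝ => t) ρ := hρ.integrable (by norm_num)
    have i2 : Integrable (fun t : ℝ => t ^ 2) ρ :=
      (hρ.mono_exponent (p := 2) (by norm_num)).integrable_sq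
    have i3 : Integrable (fun t : ℝ => |t| ^ 3) ρ := by
      have := hρ.integrable_norm_pow (p := 3) (by norm_num)
      simpa using this
    have ip : Integrable (fun t : ℝ => f 0 + s 0 * t + g2 / 2 * t ^ 2) ρ :=
      ((integrable_const _).add (i1.const_mul _)).add (i2.const_mul _)
    have ir : Integrable (fun t => f t - (f 0 + s 0 * t + g2 / 2 * t ^ 2)) ρ := by
      refine (i3.const_mul (β ^ 2)).mono' ?_ ?_
      · exact (by fun_prop : Continuous fun t => f t - (f 0 + s 0 * t + g2 / 2 * t ^ 2)).aestronglyMeasurable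
      · exact Filter.Eventually.of_forall fun t => hT t
    have e1 : ∫ t, (f 0 + s 0 * t + g2 / 2 * t ^ 2) ∂ρ = f 0 + g2 / 2 * ∫ t, t ^ 2 ∂ρ := by
      rw [integral_add (f := fun t => f 0 + s 0 * t) ((integrable_const _).add (i1.const_mul _)) (i2.const_mul _),
        integral_add (integrable_const _) (i1.const_mul _), integral_const_mul (s 0), integral_const_mul (g2 / 2), mρ, integral_const (f 0)]
      simp
    have e2 : ∫ t, f t ∂ρ = (∫ t, (f t - (f 0 + s 0 * t + g2 / 2 * t ^ 2)) ∂ρ)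
        + ∫ t, (f 0 + s 0 * t + g2 / 2 * t ^ 2) ∂ρ := by
      rw [← integral_add ir ip]; congr 1; ext t; ring
    rw [e2, e1, add_sub_cancel_right, ← Real.norm_eq_abs]
    calc _ ≤ ∫ t, β ^ 2 * |t| ^ 3 ∂ρ :=
          norm_integral_le_of_norm_le (i3.const_mul _) (Filter.Eventually.of_forall fun t => hT t)
      _ = _ := integral_const_mul _ _
  have a1 := main μ hμ mμ
  have a2 := main ν hν mν
  have a3 : |g2 / 2 * ((∫ t, t ^ 2 ∂μ) - ∫ t, t ^ 2 ∂ν)|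
      ≤ β * |(∫ t, t ^ 2 ∂μ) - ∫ t, t ^ 2 ∂ν| := by
    rw [abs_mul]
    gcongr
    rw [abs_div]; simp; linarith [abs_nonneg g2]
  show |(∫ t, f t ∂μ) - ∫ t, f t ∂ν| ≤ _
  rw [abs_le] at *
  constructor <;> nlinarith [a1.1, a1.2, a2.1, a2.2, a3.1, a3.2]

lemma map_update_pi {ι : Type} [Fintype ι] (ρ : ι → Measure ℝ) [∀ i, IsProbabilityMeasure (ρ i)]
    (j : ι) (ν : Measure ℝ) [IsProbabilityMeasure ν] :
    ((Measure.pi ρ).prod ν).map (fun z : (ι → ℝ) × ℝ => update z.1 j z.2)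
      = Measure.pi (update ρ j ν) := by
  have hprob : ∀ i, IsProbabilityMeasure (update ρ j ν i) := by
    intro i
    by_cases h : i = j
    · subst h; simpa
    · simpa [h] using inferInstanceAs (IsProbabilityMeasure (ρ i))
  have hmeas : Measurable (fun z : (ι → ℝ) × ℝ => update z.1 j z.2) := by
    rw [measurable_pi_iff]
    intro i
    by_cases h : i = j
    · subst h; simpa using measurable_snd
    · simp only [update_of_ne h]; exact (measurable_pi_apply i).comp measurable_fst
  symm
  apply Measure.pi_eq
  intro s hs
  rw [Measure.map_apply hmeas (MeasurableSet.univ_pi hs)]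
  have hpre : (fun z : (ι → ℝ) × ℝ => update z.1 j z.2) ⁻¹' (Set.pi Set.univ s)
      = (Set.pi Set.univ (update s j Set.univ)) ×ˢ s j := by
    ext z
    simp only [Set.mem_preimage, Set.mem_pi, Set.mem_univ, true_implies, Set.mem_prod]
    constructor
    · intro h
      refine ⟨fun i => ?_, by simpa using h j⟩
      by_cases hi : i = j
      · subst hi; simp
      · simpa [hi] using h i
    · rintro ⟨h1, h2⟩ i
      by_cases hi : i = j
      · subst hi; simpa using h2
      · simpa [hi] using h1 i
  rw [hpre, Measure.prod_prod, Measure.pi_pi]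
  rw [← Finset.mul_prod_erase _ _ (Finset.mem_univ j), ← Finset.mul_prod_erase _ _ (Finset.mem_univ j)]
  simp only [update_self, measure_univ, one_mul]
  rw [mul_comm]
  congr 1
  refine Finset.prod_congr rfl fun i hi => ?_
  have hi := Finset.ne_of_mem_erase hi
  simp [hi]

lemma measurable_update_pair {ι : Type} [Fintype ι] (j : ι) :
    Measurable (fun z : (ι → ℝ) × ℝ => update z.1 j z.2) := by
  rw [measurable_pi_iff]
  intro i
  by_cases h : i = j
  · subst h; simpa using measurable_snd
  · simp only [update_of_ne h]; exact (measurable_pi_apply i).comp measurable_fst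

lemma integrable_pi_of_bound {ι : Type} [Fintype ι] (ρ : ι → Measure ℝ) [∀ i, IsProbabilityMeasure (ρ i)]
    (hρ : ∀ i, Integrable id (ρ i)) (F : (ι → ℝ) → ℝ) (hF : Measurable F) (C : ℝ)
    (hb : ∀ y, |F y| ≤ C + ∑ i, |y i|) : Integrable F (Measure.pi ρ) := by
  have : Integrable (fun y : ι → ℝ => C + ∑ i, |y i|) (Measure.pi ρ) := by
    refine (integrable_const _).add (integrable_finsetSum _ fun i _ => ?_)
    have h1 : Integrable (fun y : ι → ℝ => id (y i)) (Measure.pi ρ) :=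
      (measurePreserving_eval ρ i).integrable_comp_of_integrable (hρ i)
    exact h1.abs
  exact this.mono' hF.aestronglyMeasurable (Filter.Eventually.of_forall fun y => hb y)

lemma hybrid_step {ι : Type} [Fintype ι] (ρ : ι → Measure ℝ) [∀ i, IsProbabilityMeasure (ρ i)]
    (hρ : ∀ i, Integrable id (ρ i)) (j : ι) (ν : Measure ℝ) [IsProbabilityMeasure ν]
    (hν : Integrable id ν)
    (F : (ι → ℝ) → ℝ) (hF : Measurable F) (C : ℝ) (hb : ∀ y, |F y| ≤ C + ∑ i, |y i|) (ε : ℝ)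
    (h : ∀ y, |(∫ t, F (update y j t) ∂(ρ j)) - ∫ t, F (update y j t) ∂ν| ≤ ε) :
    |(∫ y, F y ∂(Measure.pi ρ)) - ∫ y, F y ∂(Measure.pi (update ρ j ν))| ≤ ε := by
  have key : ∀ (ν : Measure ℝ) [IsProbabilityMeasure ν], Integrable id ν →
      Integrable (fun y => ∫ t, F (update y j t) ∂ν) (Measure.pi ρ) ∧
      ∫ y, F y ∂(Measure.pi (update ρ j ν)) = ∫ y, ∫ t, F (update y j t) ∂ν ∂(Measure.pi ρ) := by
    intro ν _ hν
    have hprob : ∀ i, IsProbabilityMeasure (update ρ j ν i) := by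
      intro i
      by_cases h : i = j
      · subst h; simpa
      · simpa [h] using inferInstanceAs (IsProbabilityMeasure (ρ i))
    have hInteg : Integrable F (Measure.pi (update ρ j ν)) := by
      refine integrable_pi_of_bound _ ?_ F hF C hb
      intro i
      by_cases h : i = j
      · subst h; simpa
      · simpa [h] using hρ i
    rw [← map_update_pi] at hInteg ⊢
    rw [integral_map (measurable_update_pair j).aemeasurable hF.aestronglyMeasurable]
    rw [integrable_map_measure hF.aestronglyMeasurable (measurable_update_pair j).aemeasurable] at hInteg
    exact ⟨hInteg.integral_prod_left, integral_prod _ hInteg⟩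
  have k1 := key (ρ j) (hρ j)
  have k2 := key ν hν
  rw [update_eq_self] at k1
  rw [k1.2, k2.2, ← integral_sub k1.1 k2.1]
  have : ‖∫ y, ((∫ t, F (update y j t) ∂(ρ j)) - ∫ t, F (update y j t) ∂ν) ∂(Measure.pi ρ)‖
      ≤ ε * ((Measure.pi ρ).real Set.univ) :=
    norm_integral_le_of_norm_le_const (Filter.Eventually.of_forall fun y => h y)
  simpa using this

lemma hybrid {ι : Type} [Fintype ι] (μ ν : ι → Measure ℝ) [∀ i, IsProbabilityMeasure (μ i)]
    [∀ i, IsProbabilityMeasure (ν i)]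
    (hμ : ∀ i, Integrable id (μ i)) (hν : ∀ i, Integrable id (ν i))
    (F : (ι → ℝ) → ℝ) (hF : Measurable F) (C : ℝ) (hb : ∀ y, |F y| ≤ C + ∑ i, |y i|) (ε : ι → ℝ)
    (h : ∀ j y, |(∫ t, F (update y j t) ∂(μ j)) - ∫ t, F (update y j t) ∂(ν j)| ≤ ε j) :
    |(∫ y, F y ∂(Measure.pi μ)) - ∫ y, F y ∂(Measure.pi ν)| ≤ ∑ i, ε i := by
  have claim : ∀ s : Finset ι,
      |(∫ y, F y ∂(Measure.pi μ)) - ∫ y, F y ∂(Measure.pi (s.piecewise ν μ))| ≤ ∑ i ∈ s, ε i := by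
    intro s
    induction s using Finset.induction_on with
    | empty => simp
    | insert j s hj ih =>
      rw [Finset.piecewise_insert, Finset.sum_insert hj]
      have hprob : ∀ i, IsProbabilityMeasure (s.piecewise ν μ i) := by
        intro i
        by_cases h : i ∈ s <;> simp only [Finset.piecewise, h, if_true, if_false] <;> infer_instance
      have hInteg : ∀ i, Integrable id (s.piecewise ν μ i) := by
        intro i
        by_cases h : i ∈ s <;> simp [h, hμ, hν]
      have hs := hybrid_step (s.piecewise ν μ) hInteg j (ν j) (hν j) F hF C hb (ε j)
        (by simpa [hj] using h j)
      have := abs_sub_le (∫ y, F y ∂(Measure.pi μ)) (∫ y, F y ∂(Measure.pi (s.piecewise ν μ)))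
        (∫ y, F y ∂(Measure.pi (update (s.piecewise ν μ) j (ν j))))
      linarith
  have := claim Finset.univ
  rwa [Finset.piecewise_univ] at this

end PartD

section PartE

open Function Classical MeasureTheory ProbabilityTheory

/-- soft max -/
noncomputable def Phi {N : ℕ} (β : ℝ) (S : Finset (Finset (Fin N))) (y : Fin N × Fin N → ℝ) : ℝ :=
  (1 / β) * Real.log (∑ s ∈ S, Real.exp (β * ∑ e, y e * cI s e))

lemma cI_abs_le {N : ℕ} (s : Finset (Fin N)) (e) : |cI s e| ≤ 1 := by
  unfold cI; split_ifs <;> simp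

lemma Mr_le_Phi {N : ℕ} (β : ℝ) (hβ : 0 < β) (S : Finset (Finset (Fin N))) (hS : S.Nonempty) (y) :
    Mr S hS y ≤ Phi β S y := by
  unfold Mr
  apply Finset.sup'_le
  intro s hs
  unfold Phi
  rw [one_div, inv_mul_eq_div, le_div_iff₀ hβ, mul_comm]
  rw [Real.le_log_iff_exp_le (Finset.sum_pos (fun _ _ => Real.exp_pos _) hS)]
  exact Finset.single_le_sum (f := fun s => Real.exp (β * ∑ e, y e * cI s e))
    (fun _ _ => (Real.exp_pos _).le) hs

lemma Phi_le_Mr {N : ℕ} (β : ℝ) (hβ : 0 < β) (S : Finset (Finset (Fin N))) (hS : S.Nonempty) (y) :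
    Phi β S y ≤ Mr S hS y + N * Real.log 2 / β := by
  unfold Phi
  rw [one_div, inv_mul_eq_div, div_le_iff₀ hβ, add_mul, div_mul_cancel₀ _ hβ.ne']
  have h1 : ∑ s ∈ S, Real.exp (β * ∑ e, y e * cI s e) ≤ 2 ^ N * Real.exp (Mr S hS y * β) := by
    calc _ ≤ ∑ s ∈ S, Real.exp (Mr S hS y * β) := by
          refine Finset.sum_le_sum fun s hs => ?_
          rw [Real.exp_le_exp, mul_comm]
          refine mul_le_mul_of_nonneg_right ?_ hβ.le
          exact Finset.le_sup' (fun s => ∑ e, y e * cI s e) hs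
      _ = S.card * Real.exp (Mr S hS y * β) := by simp
      _ ≤ _ := by
          refine mul_le_mul_of_nonneg_right ?_ (Real.exp_pos _).le
          have := Finset.card_le_univ S
          simp at this
          exact_mod_cast this
  calc _ ≤ Real.log (2 ^ N * Real.exp (Mr S hS y * β)) :=
        Real.log_le_log (Finset.sum_pos (fun _ _ => Real.exp_pos _) hS) h1
    _ = _ := by
        rw [Real.log_mul (by positivity) (Real.exp_pos _).ne', Real.log_pow, Real.log_exp]; ring

lemma Mr_abs_le {N : ℕ} (S : Finset (Finset (Fin N))) (hS : S.Nonempty) (y) :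
    |Mr S hS y| ≤ 0 + ∑ e, |y e| := by
  obtain ⟨s, hs, h⟩ := Finset.exists_mem_eq_sup' hS (fun s => ∑ e, y e * cI s e)
  unfold Mr
  rw [h, zero_add]
  refine (Finset.abs_sum_le_sum_abs _ _).trans (Finset.sum_le_sum fun e _ => ?_)
  rw [abs_mul]
  exact mul_le_of_le_one_right (abs_nonneg _) (cI_abs_le _ _)

lemma Phi_abs_le {N : ℕ} (β : ℝ) (hβ : 0 < β) (S : Finset (Finset (Fin N))) (hS : S.Nonempty) (y) :
    |Phi β S y| ≤ N * Real.log 2 / β + ∑ e, |y e| := by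
  have h1 := Mr_le_Phi β hβ S hS y
  have h2 := Phi_le_Mr β hβ S hS y
  have h3 := Mr_abs_le S hS y
  have h4 : 0 ≤ N * Real.log 2 / β := by have := Real.log_nonneg (x := 2) (by norm_num); positivity
  rw [abs_le] at *
  constructor <;> linarith [h3.1, h3.2]

lemma Phi_meas {N : ℕ} (β : ℝ) (S : Finset (Finset (Fin N))) : Measurable (Phi β S) := by
  unfold Phi
  refine Measurable.const_mul ?_ _
  refine Real.measurable_log.comp ?_
  fun_prop

lemma Mr_meas {N : ℕ} (S : Finset (Finset (Fin N))) (hS : S.Nonempty) : Measurable (Mr S hS) := by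
  have : Continuous (Mr S hS) := by
    unfold Mr
    refine Continuous.finset_sup'_apply hS fun s _ => ?_
    fun_prop
  exact this.measurable

lemma Phi_update {N : ℕ} (β : ℝ) (S : Finset (Finset (Fin N))) (hS : S.Nonempty) (y) (j : Fin N × Fin N) :
    ∃ A B : ℝ, 0 ≤ A ∧ 0 ≤ B ∧ 0 < A + B ∧ (¬ j.1 < j.2 → B = 0) ∧
      ∀ t, Phi β S (update y j t) = (1 / β) * Real.log (A + B * Real.exp (β * t)) := by
  let w : Finset (Fin N) → ℝ := fun s => Real.exp (β * ∑ e ∈ Finset.univ.erase j, y e * cI s e)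
  have hw : ∀ s, 0 < w s := fun s => Real.exp_pos _
  refine ⟨∑ s ∈ S, if cutb s j then 0 else w s, ∑ s ∈ S, if cutb s j then w s else 0, ?_, ?_, ?_, ?_, ?_⟩
  · exact Finset.sum_nonneg fun s _ => by split_ifs; exacts [le_rfl, (hw s).le]
  · exact Finset.sum_nonneg fun s _ => by split_ifs; exacts [(hw s).le, le_rfl]
  · rw [← Finset.sum_add_distrib]
    exact Finset.sum_pos (fun s _ => by split_ifs <;> simp [hw]) hS
  · intro hj
    refine Finset.sum_eq_zero fun s _ => ?_
    rw [if_neg]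
    intro h
    exact hj h.1
  · intro t
    unfold Phi
    congr 2
    rw [Finset.sum_mul, ← Finset.sum_add_distrib]
    refine Finset.sum_congr rfl fun s _ => ?_
    rw [← Finset.add_sum_erase _ _ (Finset.mem_univ j)]
    have : ∑ e ∈ Finset.univ.erase j, update y j t e * cI s e = ∑ e ∈ Finset.univ.erase j, y e * cI s e :=
      Finset.sum_congr rfl fun e he => by rw [update_of_ne (Finset.ne_of_mem_erase he)]
    rw [this, update_self, mul_add, Real.exp_add]
    unfold cI
    by_cases h : cutb s j
    · simp only [h, if_true, zero_add, mul_one]; rw [mul_comm]; rfl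
    · simp only [h, if_false, mul_zero, zero_mul, add_zero, Real.exp_zero, one_mul]; rfl

lemma lindeberg_compare {N : ℕ} (S : Finset (Finset (Fin N))) (hS : S.Nonempty) (β : ℝ) (hβ : 0 < β)
    (μ ν : Fin N × Fin N → Measure ℝ) [∀ e, IsProbabilityMeasure (μ e)]
    [∀ e, IsProbabilityMeasure (ν e)] (hμ : ∀ e, MemLp id 3 (μ e)) (hν : ∀ e, MemLp id 3 (ν e))
    (a b : ℝ) (ha : 0 ≤ a) (hb : 0 ≤ b)
    (h : ∀ e, e.1 < e.2 → ∫ t, t ∂(μ e) = 0 ∧ ∫ t, t ∂(ν e) = 0 ∧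
      |(∫ t, t ^ 2 ∂(μ e)) - ∫ t, t ^ 2 ∂(ν e)| ≤ a ∧
      (∫ t, |t| ^ 3 ∂(μ e)) + ∫ t, |t| ^ 3 ∂(ν e) ≤ b) :
    |(∫ y, Mr S hS y ∂(Measure.pi μ)) - ∫ y, Mr S hS y ∂(Measure.pi ν)|
      ≤ (N : ℝ) ^ 2 * (β * a + β ^ 2 * b) + N * Real.log 2 / β := by
  have iμ : ∀ e, Integrable id (μ e) := fun e => (hμ e).integrable (by norm_num)
  have iν : ∀ e, Integrable id (ν e) := fun e => (hν e).integrable (by norm_num)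
  have hphi : |(∫ y, Phi β S y ∂(Measure.pi μ)) - ∫ y, Phi β S y ∂(Measure.pi ν)|
      ≤ ∑ _e : Fin N × Fin N, (β * a + β ^ 2 * b) := by
    refine hybrid μ ν iμ iν (Phi β S) (Phi_meas β S) _ (Phi_abs_le β hβ S hS) _ ?_
    intro j y
    obtain ⟨A, B, hA, hB, hAB, h0, hu⟩ := Phi_update β S hS y j
    have hu' : ∀ t, Phi β S (@update (Fin N × Fin N) (fun _ => ℝ)
        (fun a b => Classical.propDecidable (a = b)) y j t)
        = (1 / β) * Real.log (A + B * Real.exp (β * t)) := by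
      intro t; rw [← hu t]; congr!
    simp only [hu']
    by_cases hj : j.1 < j.2
    · obtain ⟨m1, m2, m3, m4⟩ := h j hj
      refine (one_dim β A B hβ hA hB hAB (μ j) (ν j) (hμ j) (hν j) m1 m2).trans ?_
      have := mul_le_mul_of_nonneg_left m3 hβ.le
      have := mul_le_mul_of_nonneg_left m4 (sq_nonneg β)
      linarith
    · rw [h0 hj]
      simp
      positivity
  have key : ∀ (ρ : Fin N × Fin N → Measure ℝ) [∀ e, IsProbabilityMeasure (ρ e)],
      (∀ e, Integrable id (ρ e)) →
      (∫ y, Mr S hS y ∂(Measure.pi ρ)) ≤ ∫ y, Phi β S y ∂(Measure.pi ρ) ∧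
      (∫ y, Phi β S y ∂(Measure.pi ρ)) ≤ (∫ y, Mr S hS y ∂(Measure.pi ρ)) + N * Real.log 2 / β := by
    intro ρ _ iρ
    have i1 := integrable_pi_of_bound ρ iρ (Mr S hS) (Mr_meas S hS) _ (Mr_abs_le S hS)
    have i2 := integrable_pi_of_bound ρ iρ (Phi β S) (Phi_meas β S) _ (Phi_abs_le β hβ S hS)
    refine ⟨integral_mono i1 i2 fun y => Mr_le_Phi β hβ S hS y, ?_⟩
    have := integral_mono i2 (i1.add (integrable_const (N * Real.log 2 / β))) fun y => Phi_le_Mr β hβ S hS y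
    refine this.trans (le_of_eq ?_)
    simp only [Pi.add_apply]
    rw [integral_add i1 (integrable_const _)]
    simp
  obtain ⟨p1, p2⟩ := key μ iμ
  obtain ⟨q1, q2⟩ := key ν iν
  have hsum : ∑ _e : Fin N × Fin N, (β * a + β ^ 2 * b) = (N : ℝ) ^ 2 * (β * a + β ^ 2 * b) := by
    simp; ring
  rw [hsum, abs_le] at hphi
  rw [abs_le]
  constructor <;> linarith [hphi.1, hphi.2]

end PartE

section PartF

open Function Classical MeasureTheory ProbabilityTheory

/-- Bernoulli measure on bits. -/
noncomputable def bb (p : ℝ) : Measure Bool :=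
  ENNReal.ofReal p • Measure.dirac true + ENNReal.ofReal (1 - p) • Measure.dirac false

lemma bb_prob (p : ℝ) (h0 : 0 ≤ p) (h1 : p ≤ 1) : IsProbabilityMeasure (bb p) := by
  constructor
  simp only [bb, Measure.add_apply, Measure.smul_apply, measure_univ, smul_eq_mul, mul_one]
  rw [← ENNReal.ofReal_add h0 (by linarith)]
  simp

lemma bb_real (p : ℝ) (h0 : 0 ≤ p) (h1 : p ≤ 1) (b : Bool) : (bb p).real {b} = bw p b := by
  have h1' : 0 ≤ 1 - p := by linarith
  unfold Measure.real bb bw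
  cases b <;> simp [h0, h1]

lemma bb_integral (p : ℝ) (h0 : 0 ≤ p) (h1 : p ≤ 1) (f : Bool → ℝ) :
    ∫ b, f b ∂(bb p) = p * f true + (1 - p) * f false := by
  have := bb_prob p h0 h1
  rw [integral_fintype Integrable.of_finite]
  simp [bb_real p h0 h1, bw]

/-- centred and scaled Bernoulli law -/
noncomputable def bm (p c : ℝ) : Measure ℝ := (bb p).map (fun b => ((if b then (1 : ℝ) else 0) - p) / c)

lemma bm_prob (p c : ℝ) (h0 : 0 ≤ p) (h1 : p ≤ 1) : IsProbabilityMeasure (bm p c) := by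
  have := bb_prob p h0 h1
  exact Measure.isProbabilityMeasure_map (measurable_of_finite _).aemeasurable

lemma bm_integral (p c : ℝ) (h0 : 0 ≤ p) (h1 : p ≤ 1) (f : ℝ → ℝ) (hf : Continuous f) :
    ∫ t, f t ∂(bm p c) = p * f ((1 - p) / c) + (1 - p) * f (- p / c) := by
  unfold bm
  rw [integral_map (measurable_of_finite _).aemeasurable hf.aestronglyMeasurable, bb_integral p h0 h1]
  simp

lemma bm_memLp (p c : ℝ) (h0 : 0 ≤ p) (h1 : p ≤ 1) : MemLp id 3 (bm p c) := by
  have := bb_prob p h0 h1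
  unfold bm
  rw [memLp_map_measure_iff continuous_id.aestronglyMeasurable (measurable_of_finite _).aemeasurable]
  exact MemLp.of_discrete

lemma Bexp_eq_integral {E : Type} [Fintype E] [DecidableEq E] (p c : ℝ) (h0 : 0 ≤ p) (h1 : p ≤ 1)
    (F : (E → ℝ) → ℝ) (hF : Measurable F) :
    Bexp (fun _ : E => p) (fun x => F (fun e => ((if x e then (1 : ℝ) else 0) - p) / c))
      = ∫ y, F y ∂(Measure.pi fun _ : E => bm p c) := by
  have := bb_prob p h0 h1
  have h := bm_prob p c h0 h1
  unfold bm at h ⊢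
  rw [← Measure.pi_map_pi (fun _ => (measurable_of_finite _).aemeasurable)]
  rw [integral_map (measurable_of_finite _).aemeasurable hF.aestronglyMeasurable]
  rw [integral_fintype Integrable.of_finite]
  unfold Bexp
  refine Finset.sum_congr rfl fun x _ => ?_
  rw [smul_eq_mul]
  congr 1
  unfold Measure.real
  rw [Measure.pi_singleton, ENNReal.toReal_prod]
  exact Finset.prod_congr rfl fun e _ => (bb_real p h0 h1 _).symm

lemma bm_moments (d N : ℕ) (hd : 0 < d) (hN : d ≤ N) :
    (∫ t, t ∂(bm ((d : ℝ) / N) (Real.sqrt d)) = 0) ∧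
    (∫ t, t ^ 2 ∂(bm ((d : ℝ) / N) (Real.sqrt d)) = 1 / N - d / (N : ℝ) ^ 2) ∧
    (∫ t, |t| ^ 3 ∂(bm ((d : ℝ) / N) (Real.sqrt d)) ≤ 1 / (N * Real.sqrt d)) := by
  have hd' : (0 : ℝ) < d := by exact_mod_cast hd
  have hN' : (0 : ℝ) < N := by exact_mod_cast hd.trans_le hN
  have h0 : (0 : ℝ) ≤ d / N := by positivity
  have h1 : (d : ℝ) / N ≤ 1 := by rw [div_le_one hN']; exact_mod_cast hN
  have hs : 0 < Real.sqrt d := Real.sqrt_pos.mpr hd'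
  have hss : Real.sqrt d ^ 2 = d := Real.sq_sqrt hd'.le
  refine ⟨?_, ?_, ?_⟩
  · rw [bm_integral _ _ h0 h1 _ continuous_id']; ring
  · rw [bm_integral _ _ h0 h1 _ (continuous_pow 2), div_pow, div_pow, hss]
    field_simp
    ring
  · rw [bm_integral _ _ h0 h1 _ (by fun_prop)]
    set p : ℝ := d / N with hp
    rw [abs_div, abs_div, abs_neg, abs_of_nonneg h0, abs_of_nonneg (by linarith : 0 ≤ 1 - p),
      abs_of_pos hs, div_pow, div_pow]
    have e1 : (1 : ℝ) / (N * Real.sqrt d) = p / Real.sqrt d ^ 3 := by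
      rw [pow_succ, hss, hp]; field_simp
    rw [e1, mul_div_assoc', mul_div_assoc', ← add_div]
    gcongr
    have h2 : 0 ≤ 1 - p := by linarith
    have h3 : (1 - p) ^ 3 ≤ 1 - p := by
      calc (1 - p) ^ 3 ≤ (1 - p) ^ 1 := pow_le_pow_of_le_one h2 (by linarith) (by norm_num)
        _ = _ := pow_one _
    have h4 : p ^ 3 ≤ p ^ 2 := pow_le_pow_of_le_one h0 h1 (by norm_num)
    nlinarith [mul_le_mul_of_nonneg_left h3 h0, mul_le_mul_of_nonneg_left h4 h2, pow_nonneg h0 3, mul_nonneg h0 h2]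

/-- scaled Gaussian -/
noncomputable def gm (v : NNReal) (N : ℕ) : Measure ℝ := (gaussianReal 0 v).map (fun t => -(Real.sqrt N)⁻¹ * t)

/-- third absolute moment -/
noncomputable def C3 : ℝ := ∫ t, |t| ^ 3 ∂(gaussianReal 0 1)

lemma C3_nonneg : 0 ≤ C3 := integral_nonneg fun t => by positivity

lemma gm_prob (v : NNReal) (N : ℕ) : IsProbabilityMeasure (gm v N) :=
  Measure.isProbabilityMeasure_map (by fun_prop)

lemma gm_memLp (v : NNReal) (N : ℕ) : MemLp id 3 (gm v N) := by
  unfold gm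
  rw [memLp_map_measure_iff continuous_id.aestronglyMeasurable (by fun_prop)]
  exact (memLp_id_gaussianReal (μ := 0) (v := v) 3).const_mul _

lemma gm_moments (N : ℕ) (hN : 0 < N) :
    (∫ t, t ∂(gm 1 N) = 0) ∧ (∫ t, t ^ 2 ∂(gm 1 N) = 1 / N) ∧
    (∫ t, |t| ^ 3 ∂(gm 1 N) = C3 / (N * Real.sqrt N)) := by
  have hN' : (0 : ℝ) < N := by exact_mod_cast hN
  have hs : 0 < Real.sqrt N := Real.sqrt_pos.mpr hN'
  have hss : Real.sqrt N ^ 2 = N := Real.sq_sqrt hN'.le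
  have hv : ∫ t, t ^ 2 ∂(gaussianReal 0 1) = 1 := by
    have h := variance_of_integral_eq_zero (X := id) (μ := gaussianReal 0 1) (by fun_prop)
      (by simp)
    rw [variance_id_gaussianReal] at h
    simpa using h.symm
  unfold gm
  refine ⟨?_, ?_, ?_⟩
  · rw [integral_map (by fun_prop) (by fun_prop), integral_const_mul, integral_id_gaussianReal]; simp
  · rw [integral_map (by fun_prop) (by fun_prop)]
    simp only [mul_pow]
    rw [integral_const_mul, hv, neg_sq, inv_pow, hss]; simp
  · rw [integral_map (by fun_prop) (by fun_prop)]
    simp only [abs_mul, mul_pow]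
    rw [integral_const_mul, abs_neg, abs_of_pos (inv_pos.mpr hs), inv_pow, pow_succ, hss]
    unfold C3; field_simp

lemma gm_pi (N : ℕ) :
    (goeMeasure N).map (fun ω e => -(Real.sqrt N)⁻¹ * ω e)
      = Measure.pi (fun e : Fin N × Fin N => gm (if e.1 = e.2 then 2 else 1) N) := by
  unfold goeMeasure
  have : ∀ e : Fin N × Fin N, IsProbabilityMeasure ((gaussianReal 0 (if e.1 = e.2 then 2 else 1)).map
      (fun t => -(Real.sqrt N)⁻¹ * t)) := fun e => gm_prob _ N
  rw [Measure.pi_map_pi (f := fun _ t => -(Real.sqrt N)⁻¹ * t) (fun _ => by fun_prop)]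
  rfl

lemma H0_eq {N : ℕ} (ω : Fin N × Fin N → ℝ) (σ : Fin N → Bool) :
    H0 ω σ = (Real.sqrt N)⁻¹ * ∑ i, ∑ j, Jmat ω i j
      + 4 * ∑ e, (-(Real.sqrt N)⁻¹ * ω e) * cI (Finset.univ.filter fun i => σ i = true) e := by
  set s := Finset.univ.filter fun i => σ i = true with hs
  have pt : ∀ i j, Jmat ω i j * spin (σ i) * spin (σ j)
      = Jmat ω i j - 2 * (ω (i, j) * cI s (i, j) + ω (j, i) * cI s (j, i)) := by
    intro i j
    have mem : ∀ i, i ∈ s ↔ σ i = true := fun i => by simp [hs]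
    unfold Jmat cI cutb spin
    rcases lt_trichotomy i j with h | h | h
    · cases hi : σ i <;> cases hj : σ j <;> simp [h, h.le, not_lt.mpr h.le, mem, hi, hj] <;> ring
    · subst h; cases hi : σ i <;> simp
    · cases hi : σ i <;> cases hj : σ j <;> simp [h, not_le.mpr h, not_lt.mpr h.le, mem, hi, hj] <;> ring
  unfold H0
  simp only [pt, Finset.sum_sub_distrib, ← Finset.mul_sum, Finset.sum_add_distrib]
  have c1 : ∑ i, ∑ j, ω (i, j) * cI s (i, j) = ∑ e, ω e * cI s e :=
    (Fintype.sum_prod_type (fun e => ω e * cI s e)).symm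
  have c2 : ∑ i, ∑ j, ω (j, i) * cI s (j, i) = ∑ e, ω e * cI s e := by
    rw [Finset.sum_comm]; exact c1
  rw [c1, c2]
  simp only [mul_assoc]
  rw [← Finset.mul_sum]
  ring

lemma SNset_iff (N : ℕ) (α : ℚ) (k : ℕ) (hk : α * (N : ℚ) = k) (σ : Fin N → Bool) :
    σ ∈ SNset N α ↔ (Finset.univ.filter fun i => σ i = true) ∈ Finset.powersetCard k Finset.univ := by
  have hk' : (α : ℝ) * N = k := by exact_mod_cast hk
  have h1 : ∑ i, spin (σ i) = 2 * ((Finset.univ.filter fun i => σ i = true).card : ℝ) - N := by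
    have : ∀ i, spin (σ i) = 2 * (if σ i = true then (1 : ℝ) else 0) - 1 := by
      intro i; unfold spin; split_ifs <;> norm_num
    simp only [this, Finset.sum_sub_distrib, ← Finset.mul_sum, Finset.sum_boole]
    simp
  unfold SNset
  rw [Set.mem_ofPred_eq, h1, Finset.mem_powersetCard]
  constructor
  · intro h
    refine ⟨Finset.subset_univ _, ?_⟩
    have : ((Finset.univ.filter fun i => σ i = true).card : ℝ) = k := by linarith
    exact_mod_cast this
  · rintro ⟨-, h⟩
    rw [h]; linarith

lemma sSup_eq {N : ℕ} (α : ℚ) (k : ℕ) (hk : α * (N : ℚ) = k)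
    (hS : (Finset.powersetCard k (Finset.univ : Finset (Fin N))).Nonempty) (ω : Fin N × Fin N → ℝ) :
    sSup ((fun σ => H0 ω σ) '' SNset N α) = (Real.sqrt N)⁻¹ * ∑ i, ∑ j, Jmat ω i j
      + 4 * Mr _ hS (fun e => -(Real.sqrt N)⁻¹ * ω e) := by
  apply IsGreatest.csSup_eq
  constructor
  · obtain ⟨s, hs, h⟩ := Finset.exists_mem_eq_sup' hS
      (fun s => ∑ e, (-(Real.sqrt N)⁻¹ * ω e) * cI s e)
    have hf : (Finset.univ.filter fun i => (decide (i ∈ s)) = true) = s := by ext; simp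
    refine ⟨fun i => decide (i ∈ s), ?_, ?_⟩
    · rw [SNset_iff N α k hk, hf]; exact hs
    · show H0 _ _ = _
      rw [H0_eq, hf]
      unfold Mr
      rw [h]
  · rintro _ ⟨σ, hσ, rfl⟩
    show H0 _ _ ≤ _
    rw [H0_eq]
    rw [SNset_iff N α k hk] at hσ
    have := Finset.le_sup' (fun s => ∑ e, (-(Real.sqrt N)⁻¹ * ω e) * cI s e) hσ
    unfold Mr
    linarith

lemma Emax_eq {N : ℕ} (α : ℚ) (k : ℕ) (hk : α * (N : ℚ) = k)
    (hS : (Finset.powersetCard k (Finset.univ : Finset (Fin N))).Nonempty) :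
    Emax N α (fun ω σ => H0 ω σ) = 4 * ∫ y, Mr _ hS y
      ∂(Measure.pi (fun e : Fin N × Fin N => gm (if e.1 = e.2 then 2 else 1) N)) := by
  have hp : ∀ e : Fin N × Fin N, IsProbabilityMeasure (gm (if e.1 = e.2 then 2 else 1) N) :=
    fun e => gm_prob _ N
  have hm : Measurable (fun (ω : Fin N × Fin N → ℝ) e => -(Real.sqrt N)⁻¹ * ω e) := by fun_prop
  have iM := integrable_pi_of_bound (fun e : Fin N × Fin N => gm (if e.1 = e.2 then 2 else 1) N)
    (fun e => (gm_memLp _ N).integrable (by norm_num)) (Mr _ hS) (Mr_meas _ hS) _ (Mr_abs_le _ hS)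
  rw [← gm_pi] at iM ⊢
  rw [integrable_map_measure (Mr_meas _ hS).aestronglyMeasurable hm.aemeasurable] at iM
  simp only [Function.comp_def] at iM
  rw [integral_map hm.aemeasurable (Mr_meas _ hS).aestronglyMeasurable]
  unfold Emax
  have hs : ∀ ω : Fin N × Fin N → ℝ, sSup ((fun ω σ => H0 ω σ) ω '' SNset N α) = _ := fun ω => sSup_eq α k hk hS ω
  simp only [hs]
  have ev : ∀ e : Fin N × Fin N, Integrable (fun ω : Fin N × Fin N → ℝ => ω e) (goeMeasure N) ∧
      ∫ ω, ω e ∂(goeMeasure N) = 0 := by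
    intro e
    have mp := measurePreserving_eval (fun p : Fin N × Fin N => gaussianReal 0 (if p.1 = p.2 then 2 else 1)) e
    constructor
    · exact mp.integrable_comp_of_integrable (g := id) ((memLp_id_gaussianReal 1).integrable (by norm_num))
    · have h2 := integral_map (μ := goeMeasure N) (φ := Function.eval e) (f := fun t : ℝ => t)
        mp.measurable.aemeasurable (by fun_prop)
      have h3 := mp.map_eq
      unfold goeMeasure at h2 ⊢
      rw [h3, integral_id_gaussianReal] at h2
      exact h2.symm
  have evJ : ∀ i j, Integrable (fun ω : Fin N × Fin N → ℝ => Jmat ω i j) (goeMeasure N) ∧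
      ∫ ω, Jmat ω i j ∂(goeMeasure N) = 0 := by
    intro i j
    unfold Jmat
    by_cases h : i ≤ j
    · simp only [h, if_true]; exact ev _
    · simp only [h, if_false]; exact ev _
  have i0 : Integrable (fun ω : Fin N × Fin N → ℝ => (Real.sqrt N)⁻¹ * ∑ i, ∑ j, Jmat ω i j) (goeMeasure N) :=
    (integrable_finsetSum _ fun i _ => integrable_finsetSum _ fun j _ => (evJ i j).1).const_mul _
  rw [integral_add i0 (iM.const_mul 4), integral_const_mul, integral_const_mul]
  rw [integral_finsetSum _ fun i _ => integrable_finsetSum _ fun j _ => (evJ i j).1]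
  have : ∀ i, ∫ ω, ∑ j, Jmat ω i j ∂(goeMeasure N) = 0 := by
    intro i
    rw [integral_finsetSum _ fun j _ => (evJ i j).1]
    simp [evJ]
  simp [this]

end PartF

section PartG

open Function Classical MeasureTheory ProbabilityTheory

lemma main_bound (α : ℚ) (N k d : ℕ) (hk : α * (N : ℚ) = k) (hkN : k ≤ N) (hd : 0 < d) (hN : d ≤ N)
    (β : ℝ) (hβ : 0 < β) :
    |(1 / (4 * (N : ℝ))) * Emax N α (fun ω σ => H0 ω σ)
      - (erExp N ((d : ℝ) / N) (fun G => (mcut α G : ℝ)) -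
              (N : ℝ) * d * (α : ℝ) * (1 - (α : ℝ))) / (Real.sqrt d * N)|
      ≤ β * (d / N) + β ^ 2 * (1 / Real.sqrt d + C3 / Real.sqrt N) + Real.log 2 / β := by
  have hS := pc_nonempty hkN
  have hN0 : 0 < N := hd.trans_le hN
  have hd' : (0 : ℝ) < d := by exact_mod_cast hd
  have hN' : (0 : ℝ) < N := by exact_mod_cast hN0
  have h0 : (0 : ℝ) ≤ d / N := by positivity
  have h1 : (d : ℝ) / N ≤ 1 := by rw [div_le_one hN']; exact_mod_cast hN
  have hs : 0 < Real.sqrt d := Real.sqrt_pos.mpr hd'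
  have hsN : 0 < Real.sqrt N := Real.sqrt_pos.mpr hN'
  have hk' : (α : ℝ) * N = k := by exact_mod_cast hk
  have hc3 := C3_nonneg
  let μ : Fin N × Fin N → Measure ℝ := fun _ => bm ((d : ℝ) / N) (Real.sqrt d)
  let ν : Fin N × Fin N → Measure ℝ := fun e => gm (if e.1 = e.2 then 2 else 1) N
  have pb := bm_prob ((d : ℝ) / N) (Real.sqrt d) h0 h1
  have pμ : ∀ e, IsProbabilityMeasure (μ e) := fun e => bm_prob _ _ h0 h1
  have pν : ∀ e, IsProbabilityMeasure (ν e) := fun e => gm_prob _ _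
  have hY : (erExp N ((d : ℝ) / N) (fun G => (mcut α G : ℝ)) -
              (N : ℝ) * d * (α : ℝ) * (1 - (α : ℝ))) / (Real.sqrt d * N)
      = (∫ y, Mr _ hS y ∂(Measure.pi μ)) / N := by
    rw [← Bexp_eq_integral _ _ h0 h1 _ (Mr_meas _ hS), er_mcut_eq α N k hk]
    simp only [← Fsup_norm hS _ _ _ hs]
    have e1 : ∀ x : Fin N × Fin N → Bool,
        ((Fsup (Finset.powersetCard k Finset.univ) x : ℝ) - (d : ℝ) / N * (k * ((N : ℝ) - k))) / Real.sqrt d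
        = (Real.sqrt d)⁻¹ * ((Fsup (Finset.powersetCard k Finset.univ) x : ℝ)
          - (d : ℝ) / N * (k * ((N : ℝ) - k)) * 1) := by
      intro x; rw [mul_one]; field_simp
    simp only [e1]
    rw [Bexp_const_mul, Bexp_sub, Bexp_const_mul, Bexp_one, ← hk']
    field_simp
  have hX : (1 / (4 * (N : ℝ))) * Emax N α (fun ω σ => H0 ω σ)
      = (∫ y, Mr _ hS y ∂(Measure.pi ν)) / N := by
    rw [Emax_eq α k hk hS]
    field_simp
    rfl
  rw [hX, hY, ← sub_div, abs_div, abs_of_pos hN', div_le_iff₀ hN', abs_sub_comm]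
  obtain ⟨b1, b2, b3⟩ := bm_moments d N hd hN
  obtain ⟨g1, g2, g3⟩ := gm_moments N hN0
  have hcmp := lindeberg_compare _ hS β hβ μ ν (fun e => bm_memLp _ _ h0 h1) (fun e => gm_memLp _ _)
    (d / (N : ℝ) ^ 2) (1 / (N * Real.sqrt d) + C3 / (N * Real.sqrt N)) (by positivity) (by positivity)
    (by
      intro e he
      simp only [μ, ν, he.ne, if_false]
      refine ⟨b1, g1, ?_, ?_⟩
      · rw [b2, g2, sub_sub_cancel_left, abs_neg, abs_of_nonneg (by positivity)]
      · rw [g3]; linarith)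
  refine hcmp.trans (le_of_eq ?_)
  field_simp

lemma final_abs (l : Filter ℕ) [l.NeBot] (hl : l ≤ Filter.atTop) (X : ℕ → ℝ) (Y : ℕ → ℕ → ℝ)
    (g : ℕ → ℝ) (hY : ∀ d, 0 < d → Filter.Tendsto (Y d) l (nhds (g d))) (C : ℝ)
    (hb : ∀ d, 0 < d → ∀ β : ℝ, 0 < β → ∀ᶠ N in l, |X N - Y d N|
      ≤ β * ((d : ℝ) / (N : ℕ)) + β ^ 2 * (1 / Real.sqrt d + C / Real.sqrt (N : ℕ)) + Real.log 2 / β) :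
    ∃ L : ℝ, Filter.Tendsto g Filter.atTop (nhds L) ∧ Filter.Tendsto X l (nhds L) := by
  have hcast : Filter.Tendsto (fun N : ℕ => (N : ℝ)) l Filter.atTop :=
    tendsto_natCast_atTop_atTop.mono_left hl
  have claim : ∀ d : ℕ, 0 < d → ∀ β : ℝ, 0 < β → ∀ ε : ℝ, 0 < ε → ∀ᶠ N in l,
      |X N - g d| < β ^ 2 * (1 / Real.sqrt d) + Real.log 2 / β + ε := by
    intro d hd β hβ ε hε
    have t : Filter.Tendsto (fun N : ℕ => (β * ((d : ℝ) / N) + β ^ 2 * (1 / Real.sqrt d + C / Real.sqrt N)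
        + Real.log 2 / β) + |Y d N - g d|) l
        (nhds ((β * 0 + β ^ 2 * (1 / Real.sqrt d + 0) + Real.log 2 / β) + |g d - g d|)) := by
      refine Filter.Tendsto.add (Filter.Tendsto.add (Filter.Tendsto.add (Filter.Tendsto.const_mul _ ?_)
        (Filter.Tendsto.const_mul _ (Filter.Tendsto.const_add _ ?_))) tendsto_const_nhds) ?_
      · exact Filter.Tendsto.div_atTop tendsto_const_nhds hcast
      · exact Filter.Tendsto.div_atTop tendsto_const_nhds (Real.tendsto_sqrt_atTop.comp hcast)
      · exact ((hY d hd).sub_const _).abs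
    have t2 := t.eventually_lt_const
      (show _ < β ^ 2 * (1 / Real.sqrt d) + Real.log 2 / β + ε by simp; linarith)
    filter_upwards [t2, hb d hd β hβ] with N h1 h2
    have := abs_sub_le (X N) (Y d N) (g d)
    linarith
  have choose_β : ∀ ε : ℝ, 0 < ε → ∃ β : ℝ, 0 < β ∧ Real.log 2 / β < ε ∧
      ∀ᶠ d : ℕ in Filter.atTop, β ^ 2 * (1 / Real.sqrt d) < ε := by
    intro ε hε
    have hlog : 0 < Real.log 2 := Real.log_pos (by norm_num)
    refine ⟨2 * Real.log 2 / ε, by positivity, ?_, ?_⟩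
    · field_simp; norm_num
    · have : Filter.Tendsto (fun d : ℕ => (2 * Real.log 2 / ε) ^ 2 * (1 / Real.sqrt d)) Filter.atTop
          (nhds ((2 * Real.log 2 / ε) ^ 2 * 0)) := by
        refine Filter.Tendsto.const_mul _ ?_
        exact Filter.Tendsto.div_atTop tendsto_const_nhds
          (Real.tendsto_sqrt_atTop.comp tendsto_natCast_atTop_atTop)
      exact this.eventually_lt_const (by simpa using hε)
  have hcau : Cauchy (Filter.map X l) := by
    rw [Metric.cauchy_iff]
    refine ⟨inferInstance, fun ε hε => ?_⟩
    obtain ⟨β, hβ, h1, h2⟩ := choose_β (ε / 6) (by positivity)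
    obtain ⟨d, h2, hd⟩ := (h2.and (Filter.eventually_gt_atTop 0)).exists
    have h3 := claim d hd β hβ (ε / 6) (by positivity)
    refine ⟨X '' {N | |X N - g d| < ε / 2}, ?_, ?_⟩
    · refine Filter.image_mem_map ?_
      filter_upwards [h3] with N hN
      show _ < _
      linarith
    · rintro _ ⟨a, ha, rfl⟩ _ ⟨b, hb', rfl⟩
      have ha : |X a - g d| < ε / 2 := ha
      have hb' : |X b - g d| < ε / 2 := hb'
      rw [Real.dist_eq]
      rw [abs_lt] at *
      constructor <;> linarith [ha.1, ha.2, hb'.1, hb'.2]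
  obtain ⟨L, hL⟩ := CompleteSpace.complete hcau
  have hL : Filter.Tendsto X l (nhds L) := hL
  refine ⟨L, ?_, hL⟩
  rw [Metric.tendsto_atTop]
  intro ε hε
  obtain ⟨β, hβ, h1, h2⟩ := choose_β (ε / 4) (by positivity)
  obtain ⟨n, hn⟩ := Filter.eventually_atTop.mp (h2.and (Filter.eventually_gt_atTop 0))
  refine ⟨n, fun d hdn => ?_⟩
  obtain ⟨h2, hd⟩ := hn d hdn
  have h3 := claim d hd β hβ (ε / 4) (by positivity)
  have h4 := (hL.sub_const (g d)).abs
  have h5 := le_of_tendsto h4 (h3.mono fun N h => h.le)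
  rw [Real.dist_eq, abs_sub_comm]
  linarith

lemma alphaIntegral_iff (α : ℚ) (hα0 : 0 < α) (N : ℕ) (h : alphaIntegral α N) :
    N = α.den * (N / α.den) := by
  obtain ⟨k, hk⟩ := h
  have hden : (α.den : ℚ) ≠ 0 := by exact_mod_cast α.den_nz
  have h1 : α.num * (N : ℤ) = k * α.den := by
    have h2 : (α.num : ℚ) * N = k * α.den := by
      rw [← hk]
      nth_rewrite 2 [← Rat.num_div_den α]
      field_simp
    exact_mod_cast h2
  have h3 : (α.den : ℤ) ∣ α.num * N := ⟨k, by rw [h1]; ring⟩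
  have hc : IsCoprime (α.den : ℤ) α.num := by
    rw [Int.isCoprime_iff_nat_coprime]
    simpa using α.reduced.symm
  have h4 : (α.den : ℤ) ∣ N := hc.dvd_of_dvd_mul_left h3
  have h5 : α.den ∣ N := by exact_mod_cast h4
  exact (Nat.mul_div_cancel' h5).symm

lemma Y_limit (α : ℚ) (hα0 : 0 < α) (hα : α < 1 / 2) (d : ℕ) (hd : 0 < d) :
    ∃ g : ℝ, Filter.Tendsto (fun N : ℕ =>
            (erExp N ((d : ℝ) / N) (fun G => (mcut α G : ℝ)) -
              (N : ℝ) * d * (α : ℝ) * (1 - (α : ℝ))) / (Real.sqrt d * N))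
          (Filter.atTop ⊓ Filter.principal {N | alphaIntegral α N}) (nhds g) := by
  have hq : 0 < α.den := α.den_pos
  have hq' : (0 : ℝ) < α.den := by exact_mod_cast hq
  have hnum : 0 < α.num := Rat.num_pos.mpr hα0
  have hP : ((α.num.toNat : ℕ) : ℤ) = α.num := Int.toNat_of_nonneg hnum.le
  have hPq : α.num.toNat ≤ α.den := by
    have : α.num < α.den := by
      have h2 : (α.num : ℚ) / α.den < 1 := by rw [Rat.num_div_den]; linarith
      rw [div_lt_one (by exact_mod_cast hq)] at h2
      exact_mod_cast h2
    omega
  have hαP : α = (α.num.toNat : ℚ) / α.den := by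
    have : ((α.num.toNat : ℕ) : ℚ) = α.num := by exact_mod_cast hP
    rw [this, Rat.num_div_den]
  obtain ⟨l, hl⟩ := aN_limit d α.num.toNat α.den hPq hq
  have hdiv : Filter.Tendsto (fun N : ℕ => N / α.den) Filter.atTop Filter.atTop :=
    (Filter.map_div_atTop_eq_nat α.den hq).le
  have hd' : (0 : ℝ) < d := by exact_mod_cast hd
  have hs : 0 < Real.sqrt d := Real.sqrt_pos.mpr hd'
  have h1 : Filter.Tendsto (fun N : ℕ => (aN d (α.den * (N / α.den)) (α.num.toNat * (N / α.den))
      / ((N / α.den : ℕ) : ℝ) / α.den - d * (α : ℝ) * (1 - α)) / Real.sqrt d)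
      (Filter.atTop ⊓ Filter.principal {N | alphaIntegral α N})
      (nhds ((l / α.den - d * (α : ℝ) * (1 - α)) / Real.sqrt d)) :=
    ((((hl.comp hdiv).mono_left inf_le_left).div_const _).sub_const _).div_const _
  refine ⟨_, h1.congr' ?_⟩
  have hge : ∀ᶠ N in Filter.atTop ⊓ Filter.principal {N | alphaIntegral α N}, d ≤ N :=
    (Filter.eventually_ge_atTop d).filter_mono inf_le_left
  have hmem : ∀ᶠ N in Filter.atTop ⊓ Filter.principal {N | alphaIntegral α N}, alphaIntegral α N :=
    (Filter.eventually_principal.mpr fun N h => h).filter_mono inf_le_right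
  filter_upwards [hge, hmem] with N hN hInteg
  have hNq := alphaIntegral_iff α hα0 N hInteg
  set m := N / α.den with hm
  have hNpos : 0 < N := hd.trans_le hN
  have hNpos' : (0 : ℝ) < N := by exact_mod_cast hNpos
  have hNr : (N : ℝ) = α.den * m := by exact_mod_cast hNq
  have hmpos : (0 : ℝ) < m := by
    by_contra h
    have : (m : ℝ) ≤ 0 := not_lt.mp h
    nlinarith
  have hk : α * (N : ℚ) = ((α.num.toNat * m : ℕ) : ℚ) := by
    have hNQ : (N : ℚ) = α.den * m := by exact_mod_cast hNq
    have hden : (α.den : ℚ) ≠ 0 := by exact_mod_cast α.den_nz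
    rw [hNQ]
    nth_rewrite 1 [hαP]
    push_cast
    field_simp
  rw [er_mcut_eq α N _ hk, ← hNq]
  have hpp : pp d N = (d : ℝ) / N := by
    unfold pp
    apply min_eq_right
    rw [div_le_one hNpos']; exact_mod_cast hN
  unfold aN
  rw [hpp]
  set W := Bexp (fun _ : Fin N × Fin N => (d : ℝ) / N)
    (fun x => (Fsup (Finset.powersetCard (α.num.toNat * m) Finset.univ) x : ℝ))
  have hmN : (m : ℝ) = N / α.den := by rw [hNr]; field_simp
  rw [hmN]
  field_simp

end PartG

/-- Fix a rational `α ∈ (0,1/2)`.  The limits below exist and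
`lim_{d→∞} lim_{N→∞} (E_{G(N,d/N)}[MCUT_α] − N d α(1−α))/(√d N)
  = lim_{N→∞} (1/(4N)) E[max_{σ ∈ S_N(α)} H_0(σ)]`,
where `N` ranges over integers with `αN` an integer. -/
theorem statement5 (α : ℚ) (hα0 : 0 < α) (hα : α < 1 / 2) :
    ∃ L : ℝ, ∃ g : ℕ → ℝ,
      (∀ d : ℕ, 0 < d →
        Filter.Tendsto (fun N : ℕ =>
            (erExp N ((d : ℝ) / N) (fun G => (mcut α G : ℝ)) -
              (N : ℝ) * d * (α : ℝ) * (1 - (α : ℝ))) / (Real.sqrt d * N))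
          (Filter.atTop ⊓ Filter.principal {N | alphaIntegral α N}) (nhds (g d))) ∧
      Filter.Tendsto g Filter.atTop (nhds L) ∧
      Filter.Tendsto (fun N : ℕ => (1 / (4 * (N : ℝ))) * Emax N α (fun ω σ => H0 ω σ))
        (Filter.atTop ⊓ Filter.principal {N | alphaIntegral α N}) (nhds L) := by
  have hmem : ∀ᶠ N in Filter.atTop ⊓ Filter.principal {N | alphaIntegral α N}, alphaIntegral α N :=
    (Filter.eventually_principal.mpr fun N h => h).filter_mono inf_le_right
  have hne : (Filter.atTop ⊓ Filter.principal {N | alphaIntegral α N}).NeBot := by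
    rw [← Filter.frequently_mem_iff_neBot, Filter.frequently_atTop]
    intro n
    refine ⟨α.den * n, Nat.le_mul_of_pos_left n α.den_pos, α.num.toNat * n, ?_⟩
    have hP : ((α.num.toNat : ℕ) : ℤ) = α.num := Int.toNat_of_nonneg (Rat.num_pos.mpr hα0).le
    have hP' : ((α.num.toNat : ℕ) : ℚ) = α.num := by exact_mod_cast hP
    have hden : (α.den : ℚ) ≠ 0 := by exact_mod_cast α.den_nz
    push_cast
    rw [hP']
    nth_rewrite 1 [← Rat.num_div_den α]
    field_simp
  let g : ℕ → ℝ := fun d => if h : 0 < d then (Y_limit α hα0 hα d h).choose else 0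
  have hg : ∀ d : ℕ, 0 < d →
        Filter.Tendsto (fun N : ℕ =>
            (erExp N ((d : ℝ) / N) (fun G => (mcut α G : ℝ)) -
              (N : ℝ) * d * (α : ℝ) * (1 - (α : ℝ))) / (Real.sqrt d * N))
          (Filter.atTop ⊓ Filter.principal {N | alphaIntegral α N}) (nhds (g d)) := by
    intro d hd
    simp only [g, hd, dif_pos]
    exact (Y_limit α hα0 hα d hd).choose_spec
  obtain ⟨L, h1, h2⟩ := final_abs (Filter.atTop ⊓ Filter.principal {N | alphaIntegral α N}) inf_le_left
    (fun N : ℕ => (1 / (4 * (N : ℝ))) * Emax N α (fun ω σ => H0 ω σ))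
    (fun d N => (erExp N ((d : ℝ) / N) (fun G => (mcut α G : ℝ)) -
              (N : ℝ) * d * (α : ℝ) * (1 - (α : ℝ))) / (Real.sqrt d * N)) g hg C3
    (by
      intro d hd β hβ
      have hge : ∀ᶠ N in Filter.atTop ⊓ Filter.principal {N | alphaIntegral α N}, d ≤ N :=
        (Filter.eventually_ge_atTop d).filter_mono inf_le_left
      filter_upwards [hge, hmem] with N hN hInteg
      obtain ⟨k, hk⟩ := hInteg
      refine main_bound α N k d hk ?_ hd hN β hβ
      have hNn : (0 : ℚ) ≤ N := by positivity
      have : (k : ℚ) ≤ N := by rw [← hk]; nlinarith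
      exact_mod_cast this)
  exact ⟨L, g, hg, h1, h2⟩
end

section
/- For every N ≥ 1, β > 0, α ∈ (0,1/2) with αN an integer, the map v ↦ F_N(v,β;α) is differentiable on (0,1) and its derivative satisfies (1/β) ∂_v F_N(v,β;α) = −2β (2α−1)² ((1−√v)/√v) · E[ T(v,α) − ⟨R₁₂⟩_v ]. -/
open Finset MeasureTheory ProbabilityTheory

noncomputable section

/-- The interpolating Hamiltonian
`H_v(σ) = N^{-1/2} ∑_{i,j} J_{ij}(σ_i − √v(2α−1))(σ_j − √v(2α−1))`. -/
def Hv {N : ℕ} (α : ℚ) (v : ℝ) (ω : (Fin N × Fin N) → ℝ) (σ : Fin N → Bool) : ℝ :=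
  (Real.sqrt N)⁻¹ * ∑ i, ∑ j, Jmat ω i j *
    (spin (σ i) - Real.sqrt v * (2 * (α : ℝ) - 1)) *
    (spin (σ j) - Real.sqrt v * (2 * (α : ℝ) - 1))

/-- The interpolating free energy
`F_N(v,β;α) = N^{-1} E[log ∑_{σ ∈ S_N(α)} exp(β H_v(σ))]`. -/
def FN (N : ℕ) (α : ℚ) (v β : ℝ) : ℝ :=
  (N : ℝ)⁻¹ * ∫ ω, Real.log (∑ σ ∈ SNfinset N α, Real.exp (β * Hv α v ω σ)) ∂(goeMeasure N)

/-- The overlap `R₁₂ = N^{-1} ∑ᵢ τ¹ᵢ τ²ᵢ` of two configurations, where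
`τᵢ = σᵢ − √v(2α−1)`. -/
def R12 {N : ℕ} (α : ℚ) (v : ℝ) (σ₁ σ₂ : Fin N → Bool) : ℝ :=
  (N : ℝ)⁻¹ * ∑ i, (spin (σ₁ i) - Real.sqrt v * (2 * (α : ℝ) - 1)) *
    (spin (σ₂ i) - Real.sqrt v * (2 * (α : ℝ) - 1))

/-- `T(v,α) = α(1−√v(2α−1))² + (1−α)(1+√v(2α−1))²`. -/
def Tva (α : ℚ) (v : ℝ) : ℝ :=
  (α : ℝ) * (1 - Real.sqrt v * (2 * (α : ℝ) - 1)) ^ 2 +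
    (1 - (α : ℝ)) * (1 + Real.sqrt v * (2 * (α : ℝ) - 1)) ^ 2

/-- The two-replica Gibbs average `⟨h⟩_v` at fixed disorder `ω`: the average of `h` over
two independent samples from the Gibbs measure on `S_N(α)` proportional to `exp(β H_v(σ))`. -/
def gibbs2 (N : ℕ) (α : ℚ) (v β : ℝ) (ω : (Fin N × Fin N) → ℝ)
    (h : (Fin N → Bool) → (Fin N → Bool) → ℝ) : ℝ :=
  (∑ σ₁ ∈ SNfinset N α, ∑ σ₂ ∈ SNfinset N α,
      h σ₁ σ₂ * Real.exp (β * Hv α v ω σ₁) * Real.exp (β * Hv α v ω σ₂)) /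
    (∑ σ ∈ SNfinset N α, Real.exp (β * Hv α v ω σ)) ^ 2

/-- `E[⟨h⟩_v]`: the expectation over the disorder of the two-replica Gibbs average. -/
def Egibbs2 (N : ℕ) (α : ℚ) (v β : ℝ)
    (h : (Fin N → Bool) → (Fin N → Bool) → ℝ) : ℝ :=
  ∫ ω, gibbs2 N α v β ω h ∂(goeMeasure N)

end

theorem aux_stein_one (s : NNReal) (hs : s ≠ 0) (f f' : ℝ → ℝ) (C : ℝ)
    (hf : ∀ x, HasDerivAt f (f' x) x) (hfb : ∀ x, |f x| ≤ C) (hf'b : ∀ x, |f' x| ≤ C)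
    (hf'm : Measurable f') :
    ∫ x, x * f x ∂(gaussianReal 0 s) = s * ∫ x, f' x ∂(gaussianReal 0 s) := by
  have hs' : (s : ℝ) ≠ 0 := by exact_mod_cast hs
  rw [integral_gaussianReal_eq_integral_smul hs, integral_gaussianReal_eq_integral_smul hs]
  have hfm : Measurable f :=
    (continuous_iff_continuousAt.2 fun x => (hf x).continuousAt).measurable
  have hpdf : ∀ x, HasDerivAt (fun x => -(s : ℝ) * gaussianPDFReal 0 s x)
      (x * gaussianPDFReal 0 s x) x := by
    intro x
    simp only [gaussianPDFReal_def]
    have h1 : HasDerivAt (fun x : ℝ => -(x - 0) ^ 2 / (2 * (s : ℝ))) (-x / s) x := by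
      have h2 := (((hasDerivAt_id x).sub_const 0).pow 2).neg.div_const (2 * (s : ℝ))
      refine h2.congr_deriv ?_
      simp only [id]
      field_simp
      ring
    have h3 := ((h1.exp.const_mul ((√(2 * Real.pi * s))⁻¹)).const_mul (-(s : ℝ)))
    refine h3.congr_deriv ?_
    field_simp
  have hint1 : Integrable (fun x => x * gaussianPDFReal 0 s x) := by
    have h4 : Integrable (id : ℝ → ℝ) (gaussianReal 0 s) :=
      memLp_one_iff_integrable.1 (by exact_mod_cast memLp_id_gaussianReal (μ := 0) (v := s) 1)
    rw [gaussianReal_of_var_ne_zero _ hs] at h4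
    rw [integrable_withDensity_iff_integrable_smul' (measurable_gaussianPDF _ _)
      (ae_of_all _ fun _ => gaussianPDF_lt_top)] at h4
    refine h4.congr (ae_of_all _ fun x => ?_)
    simp [toReal_gaussianPDF, mul_comm]
  have hint0 := integrable_gaussianPDFReal 0 s
  have key := integral_mul_deriv_eq_deriv_mul_of_integrable (u := f) (u' := f')
    (v := fun x => -(s : ℝ) * gaussianPDFReal 0 s x) (v' := fun x => x * gaussianPDFReal 0 s x)
    (fun x _ => hf x) (fun x _ => hpdf x)
    (hint1.bdd_mul (c := C) hfm.aestronglyMeasurable (ae_of_all _ hfb))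
    ((hint0.const_mul _).bdd_mul (c := C) hf'm.aestronglyMeasurable (ae_of_all _ hf'b))
    ((hint0.const_mul _).bdd_mul (c := C) hfm.aestronglyMeasurable (ae_of_all _ hfb))
  rw [← integral_const_mul]
  calc _ = ∫ x, f x * (x * gaussianPDFReal 0 s x) := by
        refine integral_congr_ae (ae_of_all _ fun x => ?_)
        simp only [smul_eq_mul]; ring
    _ = _ := key
    _ = _ := by
        rw [← integral_neg]
        refine integral_congr_ae (ae_of_all _ fun x => ?_)
        simp only [smul_eq_mul]; ring

theorem aux_update_map {ι : Type*} [Fintype ι] [DecidableEq ι] (μ : ι → Measure ℝ)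
    [∀ i, IsProbabilityMeasure (μ i)] (p : ι) :
    MeasurePreserving (fun z : (ι → ℝ) × ℝ => Function.update z.1 p z.2)
      ((Measure.pi μ).prod (μ p)) (Measure.pi μ) := by
  have hm : Measurable (fun z : (ι → ℝ) × ℝ => Function.update z.1 p z.2) := by
    refine measurable_pi_iff.2 fun i => ?_
    by_cases h : i = p
    · subst h; simpa using measurable_snd
    · simp only [Function.update_of_ne h]
      exact (measurable_pi_apply i).comp measurable_fst
  refine ⟨hm, (Measure.pi_eq fun s hs => ?_).symm⟩
  rw [Measure.map_apply hm (MeasurableSet.univ_pi hs)]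
  have : (fun z : (ι → ℝ) × ℝ => Function.update z.1 p z.2) ⁻¹' (Set.univ.pi s) =
      (Set.univ.pi (Function.update s p Set.univ)) ×ˢ (s p) := by
    ext z
    simp only [Set.mem_preimage, Set.mem_pi, Set.mem_univ, forall_true_left, Set.mem_prod]
    constructor
    · intro h
      refine ⟨fun i => ?_, by simpa using h p⟩
      by_cases hi : i = p
      · subst hi; simp
      · simpa [Function.update_of_ne hi] using h i
    · rintro ⟨h1, h2⟩ i
      by_cases hi : i = p
      · subst hi; simpa using h2
      · simpa [Function.update_of_ne hi] using h1 i
  rw [this, Measure.prod_prod, Measure.pi_pi, ← Finset.mul_prod_erase _ _ (Finset.mem_univ p),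
    ← Finset.mul_prod_erase _ (fun i => μ i (s i)) (Finset.mem_univ p)]
  simp only [Function.update_self, measure_univ, one_mul]
  rw [mul_comm]
  congr 1
  refine Finset.prod_congr rfl fun i hi => ?_
  rw [Function.update_of_ne (Finset.ne_of_mem_erase hi)]

theorem aux_int_coord {ι : Type*} [Fintype ι] [DecidableEq ι] (s : ι → NNReal) (p : ι) :
    Integrable (fun ω : ι → ℝ => ω p) (Measure.pi fun i => gaussianReal 0 (s i)) := by
  have h4 : Integrable (id : ℝ → ℝ) (gaussianReal 0 (s p)) :=
    memLp_one_iff_integrable.1 (by exact_mod_cast memLp_id_gaussianReal (μ := 0) (v := s p) 1)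
  exact (measurePreserving_eval (fun i => gaussianReal 0 (s i)) p).integrable_comp_of_integrable h4

theorem aux_stein_pi {ι : Type*} [Fintype ι] [DecidableEq ι] (s : ι → NNReal) (hs : ∀ i, s i ≠ 0)
    (p : ι) (g g' : (ι → ℝ) → ℝ) (C : ℝ) (hgm : Measurable g) (hg'm : Measurable g')
    (hg : ∀ ω x, HasDerivAt (fun x => g (Function.update ω p x)) (g' (Function.update ω p x)) x)
    (hgb : ∀ ω, |g ω| ≤ C) (hg'b : ∀ ω, |g' ω| ≤ C) :
    ∫ ω, ω p * g ω ∂(Measure.pi fun i => gaussianReal 0 (s i)) =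
      s p * ∫ ω, g' ω ∂(Measure.pi fun i => gaussianReal 0 (s i)) := by
  have hmp := aux_update_map (fun i => gaussianReal 0 (s i)) p
  have hi1 : Integrable (fun ω => ω p * g ω) (Measure.pi fun i => gaussianReal 0 (s i)) :=
    (aux_int_coord s p).mul_bdd (c := C) hgm.aestronglyMeasurable (ae_of_all _ hgb)
  have hi2 : Integrable g' (Measure.pi fun i => gaussianReal 0 (s i)) :=
    Integrable.of_bound hg'm.aestronglyMeasurable C (ae_of_all _ hg'b)
  have hfub : ∀ h : (ι → ℝ) → ℝ, Integrable h (Measure.pi fun i => gaussianReal 0 (s i)) →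
      ∫ ω, h ω ∂(Measure.pi fun i => gaussianReal 0 (s i)) =
      ∫ ω, ∫ x, h (Function.update ω p x) ∂(gaussianReal 0 (s p))
        ∂(Measure.pi fun i => gaussianReal 0 (s i)) := by
    intro h hh
    have h5 := hmp.integrable_comp_of_integrable hh
    rw [← integral_prod (fun z : (ι → ℝ) × ℝ => h (Function.update z.1 p z.2)) h5]
    conv_lhs => rw [← hmp.map_eq]
    rw [integral_map hmp.aemeasurable]
    rw [hmp.map_eq]
    exact hh.aestronglyMeasurable
  rw [hfub _ hi1, hfub _ hi2, ← integral_const_mul]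
  refine integral_congr_ae (ae_of_all _ fun ω => ?_)
  simp only [Function.update_self]
  exact aux_stein_one (s p) (hs p) _ _ C (hg ω) (fun x => hgb _) (fun x => hg'b _)
    (hg'm.comp (measurable_update ω))

noncomputable section

/-- Linear form. -/
def auxL {ι : Type*} [Fintype ι] (a ω : ι → ℝ) : ℝ := ∑ p, a p * ω p

/-- Partition function. -/
def auxZ {ι κ : Type*} [Fintype ι] (S : Finset κ) (a : κ → ι → ℝ) (ω : ι → ℝ) : ℝ :=
  ∑ σ ∈ S, Real.exp (auxL (a σ) ω)

/-- Gibbs weight. -/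
def auxW {ι κ : Type*} [Fintype ι] (S : Finset κ) (a : κ → ι → ℝ) (σ : κ) (ω : ι → ℝ) : ℝ :=
  Real.exp (auxL (a σ) ω) / auxZ S a ω

end

section aux
variable {ι κ : Type*} [Fintype ι] {S : Finset κ}

theorem auxZ_pos (hS : S.Nonempty) (a : κ → ι → ℝ) (ω : ι → ℝ) : 0 < auxZ S a ω :=
  Finset.sum_pos (fun _ _ => Real.exp_pos _) hS

theorem auxL_meas (a : ι → ℝ) : Measurable (auxL a) := by
  unfold auxL; fun_prop

theorem auxZ_meas (a : κ → ι → ℝ) : Measurable (auxZ S a) := by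
  unfold auxZ
  exact Finset.measurable_sum _ fun σ _ => (auxL_meas _).exp

theorem auxW_meas (a : κ → ι → ℝ) (σ : κ) : Measurable (auxW S a σ) := by
  unfold auxW
  exact (auxL_meas _).exp.div (auxZ_meas a)

theorem auxW_nonneg (hS : S.Nonempty) (a : κ → ι → ℝ) (σ : κ) (ω : ι → ℝ) : 0 ≤ auxW S a σ ω :=
  div_nonneg (Real.exp_pos _).le (auxZ_pos hS a ω).le

theorem auxW_le_one (a : κ → ι → ℝ) {σ : κ} (hσ : σ ∈ S) (ω : ι → ℝ) :
    auxW S a σ ω ≤ 1 := by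
  have hS : S.Nonempty := ⟨σ, hσ⟩
  rw [auxW, div_le_one (auxZ_pos hS a ω)]
  exact Finset.single_le_sum (f := fun σ => Real.exp (auxL (a σ) ω))
    (fun _ _ => (Real.exp_pos _).le) hσ

theorem auxW_abs (a : κ → ι → ℝ) {σ : κ} (hσ : σ ∈ S) (ω : ι → ℝ) :
    |auxW S a σ ω| ≤ 1 := by
  rw [abs_of_nonneg (auxW_nonneg ⟨σ, hσ⟩ a σ ω)]
  exact auxW_le_one a hσ ω

theorem auxW_sum (hS : S.Nonempty) (a : κ → ι → ℝ) (ω : ι → ℝ) :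
    ∑ σ ∈ S, auxW S a σ ω = 1 := by
  simp only [auxW, ← Finset.sum_div]
  exact div_self (auxZ_pos hS a ω).ne'

theorem auxL_deriv [DecidableEq ι] (a : ι → ℝ) (ω : ι → ℝ) (p : ι) (x : ℝ) :
    HasDerivAt (fun x => auxL a (Function.update ω p x)) (a p) x := by
  unfold auxL
  have h := HasDerivAt.fun_sum (u := Finset.univ) (A := fun q x => a q * Function.update ω p x q)
    (A' := fun q => a q * (Pi.single p (1 : ℝ) : ι → ℝ) q) (x := x)
    (fun q _ => ((hasDerivAt_pi.1 (hasDerivAt_update ω p x)) q).const_mul (a q))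
  refine h.congr_deriv ?_
  simp [Pi.single_apply]

theorem auxW_deriv [DecidableEq ι] (hS : S.Nonempty) (a : κ → ι → ℝ) (σ : κ) (ω : ι → ℝ) (p : ι)
    (x : ℝ) :
    HasDerivAt (fun x => auxW S a σ (Function.update ω p x))
      (auxW S a σ (Function.update ω p x) *
        (a σ p - ∑ τ ∈ S, auxW S a τ (Function.update ω p x) * a τ p)) x := by
  have hZ := auxZ_pos hS a (Function.update ω p x)
  have h1 := (auxL_deriv (a σ) ω p x).exp
  have h2 : HasDerivAt (fun x => auxZ S a (Function.update ω p x))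
      (∑ τ ∈ S, Real.exp (auxL (a τ) (Function.update ω p x)) * a τ p) x :=
    HasDerivAt.fun_sum fun τ _ => (auxL_deriv (a τ) ω p x).exp
  refine (h1.div h2 hZ.ne').congr_deriv ?_
  have h3 : ∑ τ ∈ S, auxW S a τ (Function.update ω p x) * a τ p =
      (∑ τ ∈ S, Real.exp (auxL (a τ) (Function.update ω p x)) * a τ p) /
        auxZ S a (Function.update ω p x) := by
    rw [Finset.sum_div]
    exact Finset.sum_congr rfl fun τ _ => by rw [auxW]; ring
  rw [h3, auxW]
  field_simp

theorem aux_ibp_one [DecidableEq ι] (s : ι → NNReal) (hs : ∀ i, s i ≠ 0)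
    (a : κ → ι → ℝ) {σ : κ} (hσ : σ ∈ S) (p : ι) :
    ∫ ω, ω p * auxW S a σ ω ∂(Measure.pi fun i => gaussianReal 0 (s i)) =
      s p * ∫ ω, auxW S a σ ω * (a σ p - ∑ τ ∈ S, auxW S a τ ω * a τ p)
        ∂(Measure.pi fun i => gaussianReal 0 (s i)) := by
  have hS : S.Nonempty := ⟨σ, hσ⟩
  have hK : 0 ≤ |a σ p| + ∑ τ ∈ S, |a τ p| :=
    add_nonneg (abs_nonneg _) (Finset.sum_nonneg fun _ _ => abs_nonneg _)
  refine aux_stein_pi s hs p (auxW S a σ) _ (1 + (|a σ p| + ∑ τ ∈ S, |a τ p|))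
    (auxW_meas a σ) ?_ (fun ω x => auxW_deriv hS a σ ω p x) ?_ ?_
  · exact (auxW_meas a σ).mul (measurable_const.sub
      (Finset.measurable_sum _ fun τ _ => (auxW_meas a τ).mul_const _))
  · intro ω
    have := auxW_abs a hσ ω
    linarith
  · intro ω
    have h1 := auxW_abs a hσ ω
    have h2 : |a σ p - ∑ τ ∈ S, auxW S a τ ω * a τ p| ≤ |a σ p| + ∑ τ ∈ S, |a τ p| := by
      refine (abs_sub _ _).trans (add_le_add le_rfl ?_)
      refine (Finset.abs_sum_le_sum_abs _ _).trans (Finset.sum_le_sum fun τ hτ => ?_)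
      rw [abs_mul]
      exact mul_le_of_le_one_left (abs_nonneg _) (auxW_abs a hτ ω)
    rw [abs_mul]
    have := mul_le_of_le_one_left (abs_nonneg (a σ p - ∑ τ ∈ S, auxW S a τ ω * a τ p)) h1
    linarith

theorem aux_WW_int [DecidableEq ι] (s : ι → NNReal) (a : κ → ι → ℝ) {σ τ : κ} (hσ : σ ∈ S)
    (hτ : τ ∈ S) : Integrable (fun ω => auxW S a σ ω * auxW S a τ ω)
      (Measure.pi fun i => gaussianReal 0 (s i)) := by
  refine Integrable.of_bound ((auxW_meas a σ).mul (auxW_meas a τ)).aestronglyMeasurable 1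
    (ae_of_all _ fun ω => ?_)
  rw [Real.norm_eq_abs, abs_mul]
  exact mul_le_one₀ (auxW_abs a hσ ω) (abs_nonneg _) (auxW_abs a hτ ω)

theorem aux_ibp [DecidableEq ι] (hS : S.Nonempty) (s : ι → NNReal) (hs : ∀ i, s i ≠ 0)
    (a b : κ → ι → ℝ) (R : κ → κ → ℝ) (T K : ℝ) (hR : ∀ σ ∈ S, R σ σ = T)
    (hC : ∀ σ ∈ S, ∀ τ ∈ S, ∑ p, (s p : ℝ) * b σ p * a τ p = K * R σ τ) :
    ∫ ω, ∑ σ ∈ S, auxL (b σ) ω * auxW S a σ ω ∂(Measure.pi fun i => gaussianReal 0 (s i)) =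
      K * (T - ∫ ω, ∑ σ ∈ S, ∑ τ ∈ S, R σ τ * auxW S a σ ω * auxW S a τ ω
        ∂(Measure.pi fun i => gaussianReal 0 (s i))) := by
  set μ := Measure.pi fun i => gaussianReal 0 (s i) with hμ
  have hWi : ∀ σ ∈ S, Integrable (auxW S a σ) μ := fun σ hσ =>
    Integrable.of_bound (auxW_meas a σ).aestronglyMeasurable 1 (ae_of_all _ (auxW_abs a hσ))
  have hpi : ∀ σ ∈ S, ∀ p, Integrable (fun ω => ω p * auxW S a σ ω) μ := fun σ hσ p =>
    (aux_int_coord s p).mul_bdd (c := 1) (auxW_meas a σ).aestronglyMeasurable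
      (ae_of_all _ (auxW_abs a hσ))
  have hWW : ∀ σ ∈ S, ∀ τ ∈ S, Integrable (fun ω => auxW S a σ ω * auxW S a τ ω) μ :=
    fun σ hσ τ hτ => aux_WW_int s a hσ hτ
  have hterm : ∀ σ ∈ S, ∫ ω, auxL (b σ) ω * auxW S a σ ω ∂μ =
      K * T * ∫ ω, auxW S a σ ω ∂μ
        - K * ∑ τ ∈ S, R σ τ * ∫ ω, auxW S a σ ω * auxW S a τ ω ∂μ := by
    intro σ hσ
    have e1 : ∫ ω, auxL (b σ) ω * auxW S a σ ω ∂μ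
        = ∑ p, b σ p * ∫ ω, ω p * auxW S a σ ω ∂μ := by
      simp only [← integral_const_mul]
      rw [← integral_finsetSum _ fun p _ => (hpi σ hσ p).const_mul _]
      refine integral_congr_ae (ae_of_all _ fun ω => ?_)
      simp only [auxL, Finset.sum_mul]
      exact Finset.sum_congr rfl fun p _ => by ring
    have e2 : ∀ p, ∫ ω, ω p * auxW S a σ ω ∂μ = s p * (a σ p * ∫ ω, auxW S a σ ω ∂μ
        - ∑ τ ∈ S, a τ p * ∫ ω, auxW S a σ ω * auxW S a τ ω ∂μ) := by
      intro p
      rw [aux_ibp_one s hs a hσ p]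
      congr 1
      simp only [← integral_const_mul]
      rw [← integral_finsetSum _ fun τ hτ => (hWW σ hσ τ hτ).const_mul _,
        ← integral_sub ((hWi σ hσ).const_mul _)
          (integrable_finsetSum _ fun τ hτ => (hWW σ hσ τ hτ).const_mul _)]
      refine integral_congr_ae (ae_of_all _ fun ω => ?_)
      simp only [mul_sub, Finset.mul_sum]
      congr 1
      · ring
      · exact Finset.sum_congr rfl fun p _ => by ring
    rw [e1]
    simp only [e2]
    have e3 : K * T = ∑ p, (s p : ℝ) * b σ p * a σ p := by
      rw [hC σ hσ σ hσ, hR σ hσ]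
    have e4 : K * ∑ τ ∈ S, R σ τ * ∫ ω, auxW S a σ ω * auxW S a τ ω ∂μ =
        ∑ τ ∈ S, (∑ p, (s p : ℝ) * b σ p * a τ p) * ∫ ω, auxW S a σ ω * auxW S a τ ω ∂μ := by
      rw [Finset.mul_sum]
      refine Finset.sum_congr rfl fun τ hτ => ?_
      rw [hC σ hσ τ hτ]; ring
    rw [e3, e4]
    simp only [Finset.sum_mul]
    rw [Finset.sum_comm, ← Finset.sum_sub_distrib]
    refine Finset.sum_congr rfl fun p _ => ?_
    simp only [mul_sub, Finset.mul_sum]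
    congr 1
    · ring
    · exact Finset.sum_congr rfl fun p _ => by ring
  have hLW : ∀ σ ∈ S, Integrable (fun ω => auxL (b σ) ω * auxW S a σ ω) μ := by
    intro σ hσ
    have : (fun ω => auxL (b σ) ω * auxW S a σ ω) =
        fun ω => ∑ p, b σ p * (ω p * auxW S a σ ω) := by
      funext ω
      simp only [auxL, Finset.sum_mul]
      exact Finset.sum_congr rfl fun p _ => by ring
    rw [this]
    exact integrable_finsetSum _ fun p _ => (hpi σ hσ p).const_mul _
  have hRW : ∀ σ ∈ S, ∀ τ ∈ S,
      Integrable (fun ω => R σ τ * auxW S a σ ω * auxW S a τ ω) μ := by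
    intro σ hσ τ hτ
    simpa only [mul_assoc] using (hWW σ hσ τ hτ).const_mul (R σ τ)
  rw [integral_finsetSum _ hLW, Finset.sum_congr rfl hterm, Finset.sum_sub_distrib,
    ← Finset.mul_sum, ← Finset.mul_sum, ← integral_finsetSum _ hWi]
  simp only [auxW_sum hS]
  rw [integral_finsetSum _ fun σ hσ => integrable_finsetSum _ fun τ hτ => hRW σ hσ τ hτ]
  rw [mul_sub]
  congr 1
  · simp
  · congr 1
    refine Finset.sum_congr rfl fun σ hσ => ?_
    rw [integral_finsetSum _ fun τ hτ => hRW σ hσ τ hτ]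
    refine Finset.sum_congr rfl fun τ hτ => ?_
    rw [← integral_const_mul]
    simp only [mul_assoc]

theorem auxL_int [DecidableEq ι] (s : ι → NNReal) (a : ι → ℝ) :
    Integrable (auxL a) (Measure.pi fun i => gaussianReal 0 (s i)) :=
  integrable_finsetSum _ fun p _ => (aux_int_coord s p).const_mul _

theorem aux_log_bound (hS : S.Nonempty) (a : κ → ι → ℝ) (ω : ι → ℝ) :
    |Real.log (auxZ S a ω)| ≤ Real.log S.card + ∑ σ ∈ S, |auxL (a σ) ω| := by
  have hc : (1 : ℝ) ≤ S.card := by exact_mod_cast hS.card_pos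
  have hlc : 0 ≤ Real.log S.card := Real.log_nonneg hc
  have hZ := auxZ_pos hS a ω
  have hle : ∀ σ ∈ S, |auxL (a σ) ω| ≤ ∑ σ ∈ S, |auxL (a σ) ω| := fun σ hσ =>
    Finset.single_le_sum (f := fun σ => |auxL (a σ) ω|) (fun _ _ => abs_nonneg _) hσ
  rw [abs_le]
  constructor
  · obtain ⟨σ, hσ⟩ := hS
    have h1 : Real.exp (auxL (a σ) ω) ≤ auxZ S a ω :=
      Finset.single_le_sum (f := fun σ => Real.exp (auxL (a σ) ω))
        (fun _ _ => (Real.exp_pos _).le) hσ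
    have h2 := (Real.le_log_iff_exp_le hZ).2 h1
    have h3 := hle σ hσ
    have h4 := neg_abs_le (auxL (a σ) ω)
    linarith
  · rw [Real.log_le_iff_le_exp hZ, Real.exp_add, Real.exp_log (by linarith), ← nsmul_eq_mul]
    refine Finset.sum_le_card_nsmul _ _ _ fun σ hσ => Real.exp_le_exp.2 ?_
    exact (le_abs_self _).trans (hle σ hσ)

theorem aux_deriv [DecidableEq ι] (hS : S.Nonempty) (s : ι → NNReal)
    (a b : ℝ → κ → ι → ℝ) (v : ℝ)
    (hd : ∀ᶠ u in nhds v, ∀ σ ∈ S, ∀ p, HasDerivAt (fun u => a u σ p) (b u σ p) u)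
    (hb : ∀ σ ∈ S, ∀ p, ContinuousAt (fun u => b u σ p) v) :
    HasDerivAt (fun u => ∫ ω, Real.log (auxZ S (a u) ω) ∂(Measure.pi fun i => gaussianReal 0 (s i)))
      (∫ ω, ∑ σ ∈ S, auxL (b v σ) ω * auxW S (a v) σ ω
        ∂(Measure.pi fun i => gaussianReal 0 (s i))) v := by
  have hb' : ∀ᶠ u in nhds v, ∀ σ ∈ S, ∀ p, |b u σ p| ≤ |b v σ p| + 1 := by
    rw [Finset.eventually_all]
    intro σ hσ
    rw [Filter.eventually_all]
    intro p
    have := (hb σ hσ p).abs.eventually (gt_mem_nhds (lt_add_one _))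
    exact this.mono fun u hu => hu.le
  refine (hasDerivAt_integral_of_dominated_loc_of_deriv_le (hd.and hb')
    (F := fun u ω => Real.log (auxZ S (a u) ω))
    (F' := fun u ω => ∑ σ ∈ S, auxL (b u σ) ω * auxW S (a u) σ ω)
    (bound := fun ω => ∑ σ ∈ S, ∑ p, (|b v σ p| + 1) * |ω p|)
    ?_ ?_ ?_ ?_ ?_ ?_).2
  · exact Filter.Eventually.of_forall fun u => (auxZ_meas _).log.aestronglyMeasurable
  · refine Integrable.mono' (g := fun ω => Real.log S.card + ∑ σ ∈ S, |auxL (a v σ) ω|) ?_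
      (auxZ_meas _).log.aestronglyMeasurable (ae_of_all _ fun ω => aux_log_bound hS _ ω)
    exact (integrable_const _).add (integrable_finsetSum _ fun σ _ => (auxL_int s _).abs)
  · exact (Finset.measurable_sum _ fun σ _ =>
      (auxL_meas _).mul (auxW_meas _ _)).aestronglyMeasurable
  · refine ae_of_all _ fun ω u hu => ?_
    refine (norm_sum_le _ _).trans (Finset.sum_le_sum fun σ hσ => ?_)
    rw [Real.norm_eq_abs, abs_mul]
    refine (mul_le_of_le_one_right (abs_nonneg _) (auxW_abs _ hσ ω)).trans ?_
    refine (Finset.abs_sum_le_sum_abs _ _).trans (Finset.sum_le_sum fun p _ => ?_)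
    rw [abs_mul]
    exact mul_le_mul_of_nonneg_right (hu.2 σ hσ p) (abs_nonneg _)
  · exact integrable_finsetSum _ fun σ _ => integrable_finsetSum _ fun p _ =>
      (aux_int_coord s p).abs.const_mul _
  · refine ae_of_all _ fun ω u hu => ?_
    have h1 : ∀ σ ∈ S, HasDerivAt (fun u => auxL (a u σ) ω) (auxL (b u σ) ω) u := fun σ hσ =>
      HasDerivAt.fun_sum fun p _ => (hu.1 σ hσ p).mul_const _
    have h2 : HasDerivAt (fun u => auxZ S (a u) ω)
        (∑ σ ∈ S, Real.exp (auxL (a u σ) ω) * auxL (b u σ) ω) u :=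
      HasDerivAt.fun_sum fun σ hσ => (h1 σ hσ).exp
    refine (h2.log (auxZ_pos hS _ ω).ne').congr_deriv ?_
    rw [Finset.sum_div]
    exact Finset.sum_congr rfl fun σ _ => by rw [auxW]; ring

end aux

theorem aux_SN_nonempty (N : ℕ) (hN : 1 ≤ N) (α : ℚ) (hα : α < 1 / 2)
    (hint : alphaIntegral α N) : (SNfinset N α).Nonempty := by
  obtain ⟨k, hk⟩ := hint
  have hN' : (0 : ℚ) < N := by exact_mod_cast hN
  have hkN : k ≤ N := by
    have : (k : ℚ) ≤ N := by rw [← hk]; nlinarith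
    exact_mod_cast this
  obtain ⟨t, -, ht⟩ := Finset.exists_subset_card_eq (s := (Finset.univ : Finset (Fin N)))
    (n := k) (by simpa using hkN)
  refine ⟨fun i => decide (i ∈ t), ?_⟩
  have hk' : (α : ℝ) * N = k := by exact_mod_cast hk
  have h1 : ∀ i : Fin N, spin (decide (i ∈ t)) = 2 * (if i ∈ t then 1 else 0) - 1 := by
    intro i
    by_cases h : i ∈ t <;> simp [spin, h]
    norm_num
  simp only [SNfinset, Finset.mem_filter, Finset.mem_univ, true_and, h1]
  rw [Finset.sum_sub_distrib, ← Finset.mul_sum]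
  simp [ht]
  linarith

/-- Multiplicity of an upper triangular index. -/
def auxE {N : ℕ} (p : Fin N × Fin N) : ℝ := if p.1 = p.2 then 1 else if p.1 < p.2 then 2 else 0

theorem auxE_sum {N : ℕ} (f : Fin N × Fin N → ℝ) (hf : ∀ p, f p.swap = f p) :
    ∑ p, auxE p * f p = ∑ p, f p := by
  have h1 : ∑ p : Fin N × Fin N, auxE p * f p = ∑ p : Fin N × Fin N, auxE p.swap * f p := by
    rw [← Equiv.sum_comp (Equiv.prodComm (Fin N) (Fin N))]
    refine Finset.sum_congr rfl fun p _ => ?_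
    simp only [Equiv.prodComm_apply, hf]
  have h2 : ∀ p : Fin N × Fin N, auxE p + auxE p.swap = 2 := by
    intro p
    rcases lt_trichotomy p.1 p.2 with h | h | h
    · simp [auxE, h, h.ne, h.ne', h.not_gt]
    · simp [auxE, h]; norm_num
    · simp [auxE, h, h.ne, h.ne', h.not_gt]
  have h3 : ∑ p : Fin N × Fin N, auxE p * f p + ∑ p : Fin N × Fin N, auxE p.swap * f p
      = 2 * ∑ p, f p := by
    rw [← Finset.sum_add_distrib, Finset.mul_sum]
    refine Finset.sum_congr rfl fun p _ => ?_
    rw [← add_mul, h2]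
  linarith

noncomputable section

/-- Centered spin. -/
def auxT {N : ℕ} (α : ℚ) (v : ℝ) (σ : Fin N → Bool) (i : Fin N) : ℝ :=
  spin (σ i) - Real.sqrt v * (2 * (α : ℝ) - 1)

/-- Coefficients of the Hamiltonian. -/
def auxA {N : ℕ} (α : ℚ) (β v : ℝ) (σ : Fin N → Bool) (p : Fin N × Fin N) : ℝ :=
  β * (Real.sqrt N)⁻¹ * auxE p * (auxT α v σ p.1 * auxT α v σ p.2)

/-- Derivatives of the coefficients of the Hamiltonian. -/
def auxB {N : ℕ} (α : ℚ) (β v : ℝ) (σ : Fin N → Bool) (p : Fin N × Fin N) : ℝ :=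
  β * (Real.sqrt N)⁻¹ * auxE p *
    (-((2 * (α : ℝ) - 1) / (2 * Real.sqrt v)) * (auxT α v σ p.1 + auxT α v σ p.2))

end

theorem auxL_eq {N : ℕ} (α : ℚ) (β v : ℝ) (σ : Fin N → Bool) (ω : Fin N × Fin N → ℝ) :
    auxL (auxA α β v σ) ω = β * Hv α v ω σ := by
  have h1 : ∀ p : Fin N × Fin N, auxE p * ω p = auxE p * Jmat ω p.1 p.2 := by
    intro p
    rcases lt_trichotomy p.1 p.2 with h | h | h
    · simp [Jmat, h.le]
    · simp [Jmat, h.le]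
    · simp [auxE, h.ne', h.not_gt]
  have h2 := auxE_sum (fun p : Fin N × Fin N => Jmat ω p.1 p.2 * auxT α v σ p.1 * auxT α v σ p.2)
    (by
      intro p
      have : Jmat ω p.2 p.1 = Jmat ω p.1 p.2 := by
        rcases lt_trichotomy p.1 p.2 with h | h | h
        · simp [Jmat, h.le, h.not_ge]
        · rw [h]
        · simp [Jmat, h.le, h.not_ge]
      simp only [Prod.fst_swap, Prod.snd_swap, this]
      ring)
  have h3 : Hv α v ω σ = (Real.sqrt N)⁻¹ *
      ∑ p : Fin N × Fin N, Jmat ω p.1 p.2 * auxT α v σ p.1 * auxT α v σ p.2 := by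
    rw [Fintype.sum_prod_type]
    rfl
  rw [h3, ← h2, auxL, Finset.mul_sum, Finset.mul_sum]
  refine Finset.sum_congr rfl fun p _ => ?_
  have := h1 p
  rw [auxA]
  linear_combination β * (Real.sqrt N)⁻¹ * (auxT α v σ p.1 * auxT α v σ p.2) * this

theorem auxA_deriv {N : ℕ} (α : ℚ) (β : ℝ) (σ : Fin N → Bool) (p : Fin N × Fin N)
    (u : ℝ) (hu : 0 < u) :
    HasDerivAt (fun u => auxA α β u σ p) (auxB α β u σ p) u := by
  have h1 : ∀ i, HasDerivAt (fun u => auxT α u σ i) (-(1 / (2 * Real.sqrt u) * (2 * (α : ℝ) - 1))) u :=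
    fun i => ((Real.hasDerivAt_sqrt hu.ne').mul_const _).const_sub _
  refine (((h1 p.1).mul (h1 p.2)).const_mul (β * (Real.sqrt N)⁻¹ * auxE p)).congr_deriv ?_
  rw [auxB]
  ring

theorem auxB_cont {N : ℕ} (α : ℚ) (β : ℝ) (σ : Fin N → Bool) (p : Fin N × Fin N)
    (u : ℝ) (hu : 0 < u) : ContinuousAt (fun u => auxB α β u σ p) u := by
  have : 2 * Real.sqrt u ≠ 0 := by positivity
  unfold auxB auxT
  fun_prop (disch := assumption)

theorem auxT_sum {N : ℕ} (α : ℚ) (v : ℝ) (σ : Fin N → Bool) (hσ : σ ∈ SNfinset N α) :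
    ∑ i, auxT α v σ i = N * (2 * (α : ℝ) - 1) * (1 - Real.sqrt v) := by
  simp only [SNfinset, Finset.mem_filter, Finset.mem_univ, true_and] at hσ
  simp only [auxT, Finset.sum_sub_distrib, hσ]
  simp
  ring

theorem aux_R_self {N : ℕ} (hN : 1 ≤ N) (α : ℚ) (v : ℝ) (σ : Fin N → Bool)
    (hσ : σ ∈ SNfinset N α) : R12 α v σ σ = Tva α v := by
  have hN' : (N : ℝ) ≠ 0 := by positivity
  simp only [SNfinset, Finset.mem_filter, Finset.mem_univ, true_and] at hσ
  have h1 : ∀ b, spin b * spin b = 1 := by intro b; cases b <;> simp [spin]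
  have h2 : ∀ i, (spin (σ i) - Real.sqrt v * (2 * (α : ℝ) - 1)) *
      (spin (σ i) - Real.sqrt v * (2 * (α : ℝ) - 1)) =
      (1 + (Real.sqrt v * (2 * (α : ℝ) - 1)) ^ 2)
        - 2 * (Real.sqrt v * (2 * (α : ℝ) - 1)) * spin (σ i) := by
    intro i
    linear_combination h1 (σ i)
  rw [R12, Finset.sum_congr rfl fun i _ => h2 i, Finset.sum_sub_distrib, ← Finset.mul_sum, hσ, Tva]
  simp
  field_simp
  ring

theorem aux_cov {N : ℕ} (hN : 1 ≤ N) (α : ℚ) (β v : ℝ) (hv : 0 < v) (σ τ : Fin N → Bool)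
    (hτ : τ ∈ SNfinset N α) :
    ∑ p : Fin N × Fin N, (((if p.1 = p.2 then 2 else 1 : NNReal)) : ℝ) * auxB α β v σ p *
      auxA α β v τ p =
    (N * β * (-2 * β * (2 * (α : ℝ) - 1) ^ 2 * ((1 - Real.sqrt v) / Real.sqrt v))) *
      R12 α v σ τ := by
  have hN' : (0 : ℝ) < N := by positivity
  have hsv : Real.sqrt v ≠ 0 := by positivity
  have hsq : (Real.sqrt N)⁻¹ * (Real.sqrt N)⁻¹ = (N : ℝ)⁻¹ := by
    rw [← mul_inv, Real.mul_self_sqrt hN'.le]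
  have h1 : ∀ p : Fin N × Fin N, (((if p.1 = p.2 then 2 else 1 : NNReal)) : ℝ) * auxE p * auxE p
      = 2 * auxE p := by
    intro p
    by_cases h : p.1 = p.2
    · simp [auxE, h]
    · by_cases h' : p.1 < p.2 <;> simp [auxE, h, h']
  have h2 := auxE_sum (fun p : Fin N × Fin N => (auxT α v σ p.1 + auxT α v σ p.2) *
    (auxT α v τ p.1 * auxT α v τ p.2)) (by
      intro p
      simp only [Prod.fst_swap, Prod.snd_swap]
      ring)
  have h3 : ∑ p : Fin N × Fin N, (auxT α v σ p.1 + auxT α v σ p.2) *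
    (auxT α v τ p.1 * auxT α v τ p.2) =
      2 * (∑ i, auxT α v σ i * auxT α v τ i) * ∑ i, auxT α v τ i := by
    rw [Fintype.sum_prod_type]
    have : 2 * (∑ i, auxT α v σ i * auxT α v τ i) * ∑ i, auxT α v τ i =
        (∑ i, auxT α v σ i * auxT α v τ i) * (∑ i, auxT α v τ i) +
        (∑ i, auxT α v τ i) * (∑ i, auxT α v σ i * auxT α v τ i) := by ring
    rw [this, Finset.sum_mul_sum, Finset.sum_mul_sum, ← Finset.sum_add_distrib]
    refine Finset.sum_congr rfl fun i _ => ?_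
    rw [← Finset.sum_add_distrib]
    exact Finset.sum_congr rfl fun j _ => by ring
  have h4 : R12 α v σ τ = (N : ℝ)⁻¹ * ∑ i, auxT α v σ i * auxT α v τ i := rfl
  have h5 : ∀ p : Fin N × Fin N, (((if p.1 = p.2 then 2 else 1 : NNReal)) : ℝ) * auxB α β v σ p *
      auxA α β v τ p = (2 * β ^ 2 * (N : ℝ)⁻¹ * (-((2 * (α : ℝ) - 1) / (2 * Real.sqrt v)))) *
        (auxE p * ((auxT α v σ p.1 + auxT α v σ p.2) *
          (auxT α v τ p.1 * auxT α v τ p.2))) := by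
    intro p
    rw [← hsq]
    simp only [auxA, auxB]
    linear_combination (β ^ 2 * ((Real.sqrt N)⁻¹ * (Real.sqrt N)⁻¹) *
      (-((2 * (α : ℝ) - 1) / (2 * Real.sqrt v))) * ((auxT α v σ p.1 + auxT α v σ p.2) *
          (auxT α v τ p.1 * auxT α v τ p.2))) * h1 p
  rw [Finset.sum_congr rfl fun p _ => h5 p, ← Finset.mul_sum, h2, h3, auxT_sum α v τ hτ, h4]
  field_simp

/-- For every `N ≥ 1`, `β > 0`, `α ∈ (0,1/2)` with `αN` an integer, the map
`v ↦ F_N(v,β;α)` is differentiable on `(0,1)` and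
`(1/β) ∂_v F_N(v,β;α) = −2β(2α−1)²((1−√v)/√v) · E[T(v,α) − ⟨R₁₂⟩_v]`. -/
theorem statement8 (N : ℕ) (hN : 1 ≤ N) (β : ℝ) (hβ : 0 < β)
    (α : ℚ) (hα0 : 0 < α) (hα : α < 1 / 2) (hint : alphaIntegral α N)
    (v : ℝ) (hv : v ∈ Set.Ioo (0 : ℝ) 1) :
    HasDerivAt (fun v => FN N α v β)
      (β * (-2 * β * (2 * (α : ℝ) - 1) ^ 2 * ((1 - Real.sqrt v) / Real.sqrt v) *
        (Tva α v - Egibbs2 N α v β (fun σ₁ σ₂ => R12 α v σ₁ σ₂)))) v := by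
  have hN' : (N : ℝ) ≠ 0 := by positivity
  have hS := aux_SN_nonempty N hN α hα hint
  have hs : ∀ p : Fin N × Fin N, (if p.1 = p.2 then 2 else 1 : NNReal) ≠ 0 := by
    intro p; split_ifs <;> norm_num
  have hd := aux_deriv hS (fun p : Fin N × Fin N => (if p.1 = p.2 then 2 else 1 : NNReal))
    (fun u => auxA α β u) (fun u => auxB α β u) v
    ((lt_mem_nhds hv.1).mono fun u hu σ _ p => auxA_deriv α β σ p u hu)
    (fun σ _ p => auxB_cont α β σ p v hv.1)
  rw [aux_ibp hS _ hs (auxA α β v) (auxB α β v) (R12 α v) (Tva α v) _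
    (fun σ hσ => aux_R_self hN α v σ hσ)
    (fun σ _ τ hτ => aux_cov hN α β v hv.1 σ τ hτ)] at hd
  have hZ : ∀ u ω, auxZ (SNfinset N α) (auxA α β u) ω =
      ∑ σ ∈ SNfinset N α, Real.exp (β * Hv α u ω σ) := by
    intro u ω
    simp only [auxZ, auxL_eq]
  have hG : ∀ ω, ∑ σ ∈ SNfinset N α, ∑ τ ∈ SNfinset N α, R12 α v σ τ *
      auxW (SNfinset N α) (auxA α β v) σ ω * auxW (SNfinset N α) (auxA α β v) τ ω =
      gibbs2 N α v β ω (fun σ₁ σ₂ => R12 α v σ₁ σ₂) := by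
    intro ω
    simp only [gibbs2, Finset.sum_div]
    refine Finset.sum_congr rfl fun σ _ => Finset.sum_congr rfl fun τ _ => ?_
    simp only [auxW, auxL_eq, hZ]
    ring
  simp only [hZ, hG] at hd
  refine (hd.const_mul ((N : ℝ)⁻¹)).congr_deriv ?_
  rw [show (∫ ω, gibbs2 N α v β ω (fun σ₁ σ₂ => R12 α v σ₁ σ₂) ∂(Measure.pi
    fun p : Fin N × Fin N => gaussianReal 0 (if p.1 = p.2 then 2 else 1))) =
    Egibbs2 N α v β (fun σ₁ σ₂ => R12 α v σ₁ σ₂) from rfl]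
  field_simp
end
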